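/- arXiv:1409.5184 — 2 statements merged into one kernel-verified Lean document; each statement's English description precedes it below -/
import Mathlib

section
/- Let (H,α) be a monoidal Hom-Hopf algebra with bijective antipode S and (A,β) a right (H,α)-Hom-comodule algebra, B=A^{coH}. The following are equivalent: (1) A is faithfully flat as a left (B,β|_B)-Hom-module and can: A⊗_B A→A⊗H is bijective; (2) the adjoint pair (F,G) is a pair of inverse equivalences between right (B,β|_B)-Hom-modules and right (H,A)-Hom-Hopf modules, i.e. for every right B-Hom-module (M,μ) the unit η_M:M→(M⊗_B A)^{coH}, m↦μ⁻¹(m)⊗1_A, is bijective, and for every right (H,A)-Hom-Hopf module (N,ν) the counit ε_N:N^{coH}⊗_B A→N, n⊗a↦n·a, is bijective. -/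
open TensorProduct

noncomputable section

/-- A (unital) monoidal Hom-bialgebra, following Caenepeel–Goyvaerts.
The algebra axioms are stated pointwise, the coalgebra axioms at the level of
linear maps (using the standard vector-space associator to compare the two
sides of Hom-coassociativity). -/
structure MonoidalHomBialgebra (k : Type) [Field k] (H : Type) [AddCommGroup H] [Module k H] where
  mul : H →ₗ[k] H →ₗ[k] H
  one : H
  comul : H →ₗ[k] H ⊗[k] H
  counit : H →ₗ[k] k
  aut : H ≃ₗ[k] H
  hom_assoc : ∀ a b c, mul (aut a) (mul b c) = mul (mul a b) (aut c)
  mulOne : ∀ a, mul a one = aut a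
  oneMul : ∀ a, mul one a = aut a
  aut_mul : ∀ a b, aut (mul a b) = mul (aut a) (aut b)
  aut_one : aut one = one
  coassoc :
    (TensorProduct.assoc k H H H).toLinearMap ∘ₗ
        (TensorProduct.map comul aut.symm.toLinearMap) ∘ₗ comul =
      (TensorProduct.map aut.symm.toLinearMap comul) ∘ₗ comul
  counit_left :
    (TensorProduct.lid k H).toLinearMap ∘ₗ (TensorProduct.map counit LinearMap.id) ∘ₗ comul =
      aut.symm.toLinearMap
  counit_right :
    (TensorProduct.rid k H).toLinearMap ∘ₗ (TensorProduct.map LinearMap.id counit) ∘ₗ comul =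
      aut.symm.toLinearMap
  comul_aut :
    comul ∘ₗ aut.toLinearMap = (TensorProduct.map aut.toLinearMap aut.toLinearMap) ∘ₗ comul
  counit_aut : counit ∘ₗ aut.toLinearMap = counit
  comul_mul :
    comul ∘ₗ TensorProduct.lift mul =
      (TensorProduct.map (TensorProduct.lift mul) (TensorProduct.lift mul)) ∘ₗ
        (TensorProduct.tensorTensorTensorComm k H H H H).toLinearMap ∘ₗ
          (TensorProduct.map comul comul)
  comul_one : comul one = one ⊗ₜ[k] one
  counit_mul : ∀ a b, counit (mul a b) = counit a * counit b
  counit_one : counit one = 1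

/-- A monoidal Hom-Hopf algebra: a monoidal Hom-bialgebra with an antipode. -/
structure MonoidalHomHopf (k : Type) [Field k] (H : Type) [AddCommGroup H] [Module k H]
    extends MonoidalHomBialgebra k H where
  antipode : H →ₗ[k] H
  antipode_aut : antipode ∘ₗ aut.toLinearMap = aut.toLinearMap ∘ₗ antipode
  antipode_mul_left :
    TensorProduct.lift mul ∘ₗ (TensorProduct.map antipode LinearMap.id) ∘ₗ comul =
      LinearMap.toSpanSingleton k H one ∘ₗ counit
  antipode_mul_right :
    TensorProduct.lift mul ∘ₗ (TensorProduct.map LinearMap.id antipode) ∘ₗ comul =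
      LinearMap.toSpanSingleton k H one ∘ₗ counit

variable {k : Type} [Field k] {H : Type} [AddCommGroup H] [Module k H]

/-- A right (H,α)-Hom-comodule. -/
structure HomComodule (Hb : MonoidalHomBialgebra k H) (M : Type) [AddCommGroup M] [Module k M] where
  coact : M →ₗ[k] M ⊗[k] H
  aut : M ≃ₗ[k] M
  coassoc :
    (TensorProduct.map aut.symm.toLinearMap Hb.comul) ∘ₗ coact =
      (TensorProduct.assoc k M H H).toLinearMap ∘ₗ
        (TensorProduct.map coact Hb.aut.symm.toLinearMap) ∘ₗ coact
  counit :
    (TensorProduct.rid k M).toLinearMap ∘ₗ (TensorProduct.map LinearMap.id Hb.counit) ∘ₗ coact =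
      aut.symm.toLinearMap
  coact_aut :
    coact ∘ₗ aut.toLinearMap = (TensorProduct.map aut.toLinearMap Hb.aut.toLinearMap) ∘ₗ coact

/-- A left (H,α)-Hom-comodule. -/
structure HomLeftComodule (Hb : MonoidalHomBialgebra k H) (M : Type) [AddCommGroup M] [Module k M] where
  coact : M →ₗ[k] H ⊗[k] M
  aut : M ≃ₗ[k] M
  coassoc :
    (TensorProduct.map Hb.comul aut.symm.toLinearMap) ∘ₗ coact =
      (TensorProduct.assoc k H H M).symm.toLinearMap ∘ₗ
        (TensorProduct.map Hb.aut.symm.toLinearMap coact) ∘ₗ coact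
  counit :
    (TensorProduct.lid k M).toLinearMap ∘ₗ (TensorProduct.map Hb.counit LinearMap.id) ∘ₗ coact =
      aut.symm.toLinearMap
  coact_aut :
    coact ∘ₗ aut.toLinearMap = (TensorProduct.map Hb.aut.toLinearMap aut.toLinearMap) ∘ₗ coact

/-- A right (H,α)-Hom-comodule algebra. -/
structure HomComoduleAlgebra (Hb : MonoidalHomBialgebra k H) (A : Type) [AddCommGroup A] [Module k A] where
  mul : A →ₗ[k] A →ₗ[k] A
  one : A
  aut : A ≃ₗ[k] A
  hom_assoc : ∀ a b c, mul (aut a) (mul b c) = mul (mul a b) (aut c)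
  mulOne : ∀ a, mul a one = aut a
  oneMul : ∀ a, mul one a = aut a
  aut_mul : ∀ a b, aut (mul a b) = mul (aut a) (aut b)
  aut_one : aut one = one
  coact : A →ₗ[k] A ⊗[k] H
  coassoc :
    (TensorProduct.map aut.symm.toLinearMap Hb.comul) ∘ₗ coact =
      (TensorProduct.assoc k A H H).toLinearMap ∘ₗ
        (TensorProduct.map coact Hb.aut.symm.toLinearMap) ∘ₗ coact
  counit :
    (TensorProduct.rid k A).toLinearMap ∘ₗ (TensorProduct.map LinearMap.id Hb.counit) ∘ₗ coact =
      aut.symm.toLinearMap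
  coact_aut :
    coact ∘ₗ aut.toLinearMap = (TensorProduct.map aut.toLinearMap Hb.aut.toLinearMap) ∘ₗ coact
  coact_mul :
    coact ∘ₗ TensorProduct.lift mul =
      (TensorProduct.map (TensorProduct.lift mul) (TensorProduct.lift Hb.mul)) ∘ₗ
        (TensorProduct.tensorTensorTensorComm k A H A H).toLinearMap ∘ₗ
          (TensorProduct.map coact coact)
  coact_one : coact one = one ⊗ₜ[k] Hb.one

variable {A : Type} [AddCommGroup A] [Module k A]

/-- A right (A,β)-Hom-module. -/
structure HomModule {Hb : MonoidalHomBialgebra k H} (Ac : HomComoduleAlgebra Hb A)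
    (M : Type) [AddCommGroup M] [Module k M] where
  act : M →ₗ[k] A →ₗ[k] M
  aut : M ≃ₗ[k] M
  act_act : ∀ m a b, act (act m a) (Ac.aut b) = act (aut m) (Ac.mul a b)
  act_one : ∀ m, act m Ac.one = aut m
  aut_act : ∀ m a, aut (act m a) = act (aut m) (Ac.aut a)

/-- A right Hom-module over the subalgebra of `A` carved out by `Bset`
(typically the coinvariants `B = A^{co H}`): the action is a bilinear map
`M × A → M` whose Hom-module axioms are only required on `Bset`. -/
structure HomModuleOn {Hb : MonoidalHomBialgebra k H} (Ac : HomComoduleAlgebra Hb A)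
    (Bset : Set A) (M : Type) [AddCommGroup M] [Module k M] where
  act : M →ₗ[k] A →ₗ[k] M
  aut : M ≃ₗ[k] M
  act_act : ∀ m, ∀ b ∈ Bset, ∀ b' ∈ Bset, act (act m b) (Ac.aut b') = act (aut m) (Ac.mul b b')
  act_one : ∀ m, act m Ac.one = aut m
  aut_act : ∀ m, ∀ b ∈ Bset, aut (act m b) = act (aut m) (Ac.aut b)

/-- A left Hom-module over the subalgebra of `A` carved out by `Bset`. -/
structure HomLeftModuleOn {Hb : MonoidalHomBialgebra k H} (Ac : HomComoduleAlgebra Hb A)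
    (Bset : Set A) (M : Type) [AddCommGroup M] [Module k M] where
  act : A →ₗ[k] M →ₗ[k] M
  aut : M ≃ₗ[k] M
  act_act : ∀ m, ∀ b ∈ Bset, ∀ b' ∈ Bset, act (Ac.aut b) (act b' m) = act (Ac.mul b b') (aut m)
  act_one : ∀ m, act Ac.one m = aut m
  aut_act : ∀ m, ∀ b ∈ Bset, aut (act b m) = act (Ac.aut b) (aut m)

/-- A right-right (H,A)-Hom-Hopf module (a relative Hom-Hopf module). -/
structure HomHopfModule {Hb : MonoidalHomBialgebra k H} (Ac : HomComoduleAlgebra Hb A)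
    (N : Type) [AddCommGroup N] [Module k N] where
  act : N →ₗ[k] A →ₗ[k] N
  aut : N ≃ₗ[k] N
  act_act : ∀ n a b, act (act n a) (Ac.aut b) = act (aut n) (Ac.mul a b)
  act_one : ∀ n, act n Ac.one = aut n
  aut_act : ∀ n a, aut (act n a) = act (aut n) (Ac.aut a)
  coact : N →ₗ[k] N ⊗[k] H
  coassoc :
    (TensorProduct.map aut.symm.toLinearMap Hb.comul) ∘ₗ coact =
      (TensorProduct.assoc k N H H).toLinearMap ∘ₗ
        (TensorProduct.map coact Hb.aut.symm.toLinearMap) ∘ₗ coact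
  counit :
    (TensorProduct.rid k N).toLinearMap ∘ₗ (TensorProduct.map LinearMap.id Hb.counit) ∘ₗ coact =
      aut.symm.toLinearMap
  coact_aut :
    coact ∘ₗ aut.toLinearMap = (TensorProduct.map aut.toLinearMap Hb.aut.toLinearMap) ∘ₗ coact
  compat :
    coact ∘ₗ TensorProduct.lift act =
      (TensorProduct.map (TensorProduct.lift act) (TensorProduct.lift Hb.mul)) ∘ₗ
        (TensorProduct.tensorTensorTensorComm k N H A H).toLinearMap ∘ₗ
          (TensorProduct.map coact Ac.coact)

/-- A left-right (H,A)-Hom-Hopf module. -/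
structure LRHomHopfModule {Hb : MonoidalHomBialgebra k H} (Ac : HomComoduleAlgebra Hb A)
    (N : Type) [AddCommGroup N] [Module k N] where
  act : A →ₗ[k] N →ₗ[k] N
  aut : N ≃ₗ[k] N
  act_act : ∀ n a b, act (Ac.aut a) (act b n) = act (Ac.mul a b) (aut n)
  act_one : ∀ n, act Ac.one n = aut n
  aut_act : ∀ n a, aut (act a n) = act (Ac.aut a) (aut n)
  coact : N →ₗ[k] N ⊗[k] H
  coassoc :
    (TensorProduct.map aut.symm.toLinearMap Hb.comul) ∘ₗ coact =
      (TensorProduct.assoc k N H H).toLinearMap ∘ₗ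
        (TensorProduct.map coact Hb.aut.symm.toLinearMap) ∘ₗ coact
  counit :
    (TensorProduct.rid k N).toLinearMap ∘ₗ (TensorProduct.map LinearMap.id Hb.counit) ∘ₗ coact =
      aut.symm.toLinearMap
  coact_aut :
    coact ∘ₗ aut.toLinearMap = (TensorProduct.map aut.toLinearMap Hb.aut.toLinearMap) ∘ₗ coact
  compat :
    coact ∘ₗ TensorProduct.lift act =
      (TensorProduct.map (TensorProduct.lift act) (TensorProduct.lift Hb.mul)) ∘ₗ
        (TensorProduct.tensorTensorTensorComm k A H N H).toLinearMap ∘ₗ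
          (TensorProduct.map Ac.coact coact)

/-- Coinvariants (as a set) of a coaction `coact` with structure automorphism `autM`. -/
def coinvSetOf {M : Type} [AddCommGroup M] [Module k M] (oneH : H)
    (coact : M →ₗ[k] M ⊗[k] H) (autM : M ≃ₗ[k] M) : Set M :=
  {m | coact m = autM.symm m ⊗ₜ[k] oneH}

/-- Coinvariants as a submodule. -/
def coinvSubmoduleOf {M : Type} [AddCommGroup M] [Module k M] (oneH : H)
    (coact : M →ₗ[k] M ⊗[k] H) (autM : M ≃ₗ[k] M) : Submodule k M :=
  LinearMap.ker (coact - ((TensorProduct.mk k M H).flip oneH) ∘ₗ autM.symm.toLinearMap)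

/-- The coinvariants `B = A^{co H}` of a Hom-comodule algebra. -/
def coinvA {Hb : MonoidalHomBialgebra k H} (Ac : HomComoduleAlgebra Hb A) : Set A :=
  coinvSetOf Hb.one Ac.coact Ac.aut

/-- The defining relations of the tensor product `M ⊗_B A` for a right `B`-Hom-module `M`. -/
def relSubR {M : Type} [AddCommGroup M] [Module k M]
    (mulA : A →ₗ[k] A →ₗ[k] A) (autA : A ≃ₗ[k] A) (Bset : Set A)
    (act : M →ₗ[k] A →ₗ[k] M) (autM : M ≃ₗ[k] M) : Submodule k (M ⊗[k] A) :=
  Submodule.span k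
    {x | ∃ m a b, b ∈ Bset ∧ x = act m b ⊗ₜ[k] autA a - autM m ⊗ₜ[k] mulA b a}

/-- The defining relations of the tensor product `A ⊗_B M` for a left `B`-Hom-module `M`. -/
def relSubL {M : Type} [AddCommGroup M] [Module k M]
    (mulA : A →ₗ[k] A →ₗ[k] A) (autA : A ≃ₗ[k] A) (Bset : Set A)
    (act : A →ₗ[k] M →ₗ[k] M) (autM : M ≃ₗ[k] M) : Submodule k (A ⊗[k] M) :=
  Submodule.span k
    {x | ∃ a m b, b ∈ Bset ∧ x = autA a ⊗ₜ[k] act b m - mulA a b ⊗ₜ[k] autM m}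

/-- The cotensor product `X □_H V` of a right Hom-comodule and a left Hom-comodule,
as a submodule of `X ⊗ V`. -/
def cotensorSub {X V : Type} [AddCommGroup X] [Module k X] [AddCommGroup V] [Module k V]
    (coactX : X →ₗ[k] X ⊗[k] H) (autX : X ≃ₗ[k] X)
    (coactV : V →ₗ[k] H ⊗[k] V) (autV : V ≃ₗ[k] V) : Submodule k (X ⊗[k] V) :=
  LinearMap.ker
    ((TensorProduct.map coactX autV.symm.toLinearMap) -
      ((TensorProduct.assoc k X H V).symm.toLinearMap ∘ₗ
        TensorProduct.map autX.symm.toLinearMap coactV))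

/-- The canonical Galois map at the level of `A ⊗ A`:
`a ⊗ b ↦ β⁻¹(a)·b₍₀₎ ⊗ α(b₍₁₎)`. -/
def canPreLin {Hb : MonoidalHomBialgebra k H} (Ac : HomComoduleAlgebra Hb A) :
    A ⊗[k] A →ₗ[k] A ⊗[k] H :=
  (TensorProduct.map (TensorProduct.lift Ac.mul) Hb.aut.toLinearMap) ∘ₗ
    (TensorProduct.assoc k A A H).symm.toLinearMap ∘ₗ
      (TensorProduct.map Ac.aut.symm.toLinearMap Ac.coact)

/-- The second canonical Galois map at the level of `A ⊗ A`:
`a ⊗ b ↦ a₍₀₎·β⁻¹(b) ⊗ α(a₍₁₎)`. -/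
def canPreLin' {Hb : MonoidalHomBialgebra k H} (Ac : HomComoduleAlgebra Hb A) :
    A ⊗[k] A →ₗ[k] A ⊗[k] H :=
  (TensorProduct.map (TensorProduct.lift Ac.mul) Hb.aut.toLinearMap) ∘ₗ
    (TensorProduct.assoc k A A H).symm.toLinearMap ∘ₗ
      (TensorProduct.map LinearMap.id (TensorProduct.comm k H A).toLinearMap) ∘ₗ
        (TensorProduct.assoc k A H A).toLinearMap ∘ₗ
          (TensorProduct.map Ac.coact Ac.aut.symm.toLinearMap)

/-- `φ : H → A` is a total integral. -/
def IsTotalIntegral {Hb : MonoidalHomBialgebra k H} (Ac : HomComoduleAlgebra Hb A)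
    (φ : H →ₗ[k] A) : Prop :=
  φ ∘ₗ Hb.aut.toLinearMap = Ac.aut.toLinearMap ∘ₗ φ ∧
    Ac.coact ∘ₗ φ = (TensorProduct.map φ LinearMap.id) ∘ₗ Hb.comul ∧
      φ Hb.one = Ac.one

/-- The Hom-comodule structure on `M ⊗ A` inducing that of `M ⊗_B A`:
`m ⊗ a ↦ (μ⁻¹(m) ⊗ a₍₀₎) ⊗ α(a₍₁₎)`. -/
def quotCoactPreR {Hb : MonoidalHomBialgebra k H} (Ac : HomComoduleAlgebra Hb A)
    {M : Type} [AddCommGroup M] [Module k M] (autM : M ≃ₗ[k] M) :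
    (M ⊗[k] A) →ₗ[k] (M ⊗[k] A) ⊗[k] H :=
  (TensorProduct.assoc k M A H).symm.toLinearMap ∘ₗ
    TensorProduct.map autM.symm.toLinearMap
      ((TensorProduct.map LinearMap.id Hb.aut.toLinearMap) ∘ₗ Ac.coact)

/-- The Hom-comodule structure on `A ⊗ M` inducing that of `A ⊗_B M`:
`a ⊗ m ↦ (a₍₀₎ ⊗ μ⁻¹(m)) ⊗ α(a₍₁₎)`. -/
def quotCoactPreL {Hb : MonoidalHomBialgebra k H} (Ac : HomComoduleAlgebra Hb A)
    {M : Type} [AddCommGroup M] [Module k M] (autM : M ≃ₗ[k] M) :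
    (A ⊗[k] M) →ₗ[k] (A ⊗[k] M) ⊗[k] H :=
  (TensorProduct.assoc k A M H).symm.toLinearMap ∘ₗ
    (TensorProduct.map LinearMap.id (TensorProduct.comm k H M).toLinearMap) ∘ₗ
      (TensorProduct.assoc k A H M).toLinearMap ∘ₗ
        TensorProduct.map
          ((TensorProduct.map LinearMap.id Hb.aut.toLinearMap) ∘ₗ Ac.coact)
          autM.symm.toLinearMap

/-- Bijectivity of the adjunction unit `η_M : M → (M ⊗_B A)^{co H}`, `m ↦ μ⁻¹(m) ⊗ 1_A`,
for a right `B`-Hom-module `M`.  Since the Hom-comodule structure of `M ⊗_B A` is the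
one induced from `M ⊗ A`, it is quantified over all maps `ρbar` (resp. `θ`) induced by
the comodule structure (resp. by `μ⁻¹ ⊗ β⁻¹`) on `M ⊗ A`. -/
def UnitBijectiveR {Hb : MonoidalHomBialgebra k H} (Ac : HomComoduleAlgebra Hb A)
    (Bset : Set A) {M : Type} [AddCommGroup M] [Module k M]
    (S : HomModuleOn Ac Bset M) : Prop :=
  ∀ (ρbar : ((M ⊗[k] A) ⧸ relSubR Ac.mul Ac.aut Bset S.act S.aut) →ₗ[k]
      ((M ⊗[k] A) ⧸ relSubR Ac.mul Ac.aut Bset S.act S.aut) ⊗[k] H)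
    (θ : ((M ⊗[k] A) ⧸ relSubR Ac.mul Ac.aut Bset S.act S.aut) →ₗ[k]
      ((M ⊗[k] A) ⧸ relSubR Ac.mul Ac.aut Bset S.act S.aut)),
    ρbar ∘ₗ (relSubR Ac.mul Ac.aut Bset S.act S.aut).mkQ =
      (TensorProduct.map (relSubR Ac.mul Ac.aut Bset S.act S.aut).mkQ LinearMap.id) ∘ₗ
        quotCoactPreR Ac S.aut →
    θ ∘ₗ (relSubR Ac.mul Ac.aut Bset S.act S.aut).mkQ =
      (relSubR Ac.mul Ac.aut Bset S.act S.aut).mkQ ∘ₗ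
        TensorProduct.map S.aut.symm.toLinearMap Ac.aut.symm.toLinearMap →
    ((∀ m : M, ρbar ((relSubR Ac.mul Ac.aut Bset S.act S.aut).mkQ (S.aut.symm m ⊗ₜ[k] Ac.one)) =
        θ ((relSubR Ac.mul Ac.aut Bset S.act S.aut).mkQ (S.aut.symm m ⊗ₜ[k] Ac.one)) ⊗ₜ[k] Hb.one) ∧
      Function.Injective
        (fun m : M => (relSubR Ac.mul Ac.aut Bset S.act S.aut).mkQ (S.aut.symm m ⊗ₜ[k] Ac.one)) ∧
      ∀ x, ρbar x = θ x ⊗ₜ[k] Hb.one →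
        ∃ m : M, (relSubR Ac.mul Ac.aut Bset S.act S.aut).mkQ (S.aut.symm m ⊗ₜ[k] Ac.one) = x)

/-- The relations of `N^{co H} ⊗_B A` for a right (H,A)-Hom-Hopf module `N`;
the closure of the coinvariants under the `B`-action and the automorphism is
encoded by existential membership. -/
def relCoinvR {Hb : MonoidalHomBialgebra k H} (Ac : HomComoduleAlgebra Hb A)
    (Bset : Set A) {N : Type} [AddCommGroup N] [Module k N]
    (P : HomHopfModule Ac N) :
    Submodule k ((coinvSubmoduleOf Hb.one P.coact P.aut : Submodule k N) ⊗[k] A) :=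
  Submodule.span k
    {x | ∃ (n n' n'' : coinvSubmoduleOf Hb.one P.coact P.aut) (a b : A), b ∈ Bset ∧
      (n' : N) = P.act n b ∧ (n'' : N) = P.aut n ∧
      x = n' ⊗ₜ[k] Ac.aut a - n'' ⊗ₜ[k] Ac.mul b a}

/-- The counit of the adjunction at the level of `N^{co H} ⊗ A`: `n ⊗ a ↦ n · a`. -/
def counitPre {Hb : MonoidalHomBialgebra k H} (Ac : HomComoduleAlgebra Hb A)
    {N : Type} [AddCommGroup N] [Module k N] (P : HomHopfModule Ac N) :
    ((coinvSubmoduleOf Hb.one P.coact P.aut : Submodule k N) ⊗[k] A) →ₗ[k] N :=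
  TensorProduct.lift (P.act ∘ₗ (coinvSubmoduleOf Hb.one P.coact P.aut).subtype)

/-- Bijectivity of the adjunction counit `ε_N : N^{co H} ⊗_B A → N`, `n ⊗ a ↦ n·a`:
equivalently, the lift `N^{co H} ⊗ A → N` is surjective and its kernel is exactly
the defining relations of `⊗_B`. -/
def CounitBijectiveR {Hb : MonoidalHomBialgebra k H} (Ac : HomComoduleAlgebra Hb A)
    (Bset : Set A) {N : Type} [AddCommGroup N] [Module k N]
    (P : HomHopfModule Ac N) : Prop :=
  Function.Surjective (counitPre Ac P) ∧ LinearMap.ker (counitPre Ac P) = relCoinvR Ac Bset P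

/-- Bijectivity of the adjunction unit `η'_M : M → (A ⊗_B M)^{co H}`, `m ↦ 1_A ⊗ μ⁻¹(m)`,
for a left `B`-Hom-module `M`. -/
def UnitBijectiveL {Hb : MonoidalHomBialgebra k H} (Ac : HomComoduleAlgebra Hb A)
    (Bset : Set A) {M : Type} [AddCommGroup M] [Module k M]
    (S : HomLeftModuleOn Ac Bset M) : Prop :=
  ∀ (ρbar : ((A ⊗[k] M) ⧸ relSubL Ac.mul Ac.aut Bset S.act S.aut) →ₗ[k]
      ((A ⊗[k] M) ⧸ relSubL Ac.mul Ac.aut Bset S.act S.aut) ⊗[k] H)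
    (θ : ((A ⊗[k] M) ⧸ relSubL Ac.mul Ac.aut Bset S.act S.aut) →ₗ[k]
      ((A ⊗[k] M) ⧸ relSubL Ac.mul Ac.aut Bset S.act S.aut)),
    ρbar ∘ₗ (relSubL Ac.mul Ac.aut Bset S.act S.aut).mkQ =
      (TensorProduct.map (relSubL Ac.mul Ac.aut Bset S.act S.aut).mkQ LinearMap.id) ∘ₗ
        quotCoactPreL Ac S.aut →
    θ ∘ₗ (relSubL Ac.mul Ac.aut Bset S.act S.aut).mkQ =
      (relSubL Ac.mul Ac.aut Bset S.act S.aut).mkQ ∘ₗ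
        TensorProduct.map Ac.aut.symm.toLinearMap S.aut.symm.toLinearMap →
    ((∀ m : M, ρbar ((relSubL Ac.mul Ac.aut Bset S.act S.aut).mkQ (Ac.one ⊗ₜ[k] S.aut.symm m)) =
        θ ((relSubL Ac.mul Ac.aut Bset S.act S.aut).mkQ (Ac.one ⊗ₜ[k] S.aut.symm m)) ⊗ₜ[k] Hb.one) ∧
      Function.Injective
        (fun m : M => (relSubL Ac.mul Ac.aut Bset S.act S.aut).mkQ (Ac.one ⊗ₜ[k] S.aut.symm m)) ∧
      ∀ x, ρbar x = θ x ⊗ₜ[k] Hb.one →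
        ∃ m : M, (relSubL Ac.mul Ac.aut Bset S.act S.aut).mkQ (Ac.one ⊗ₜ[k] S.aut.symm m) = x)

/-- The relations of `A ⊗_B N^{co H}` for a left-right (H,A)-Hom-Hopf module `N`. -/
def relCoinvL {Hb : MonoidalHomBialgebra k H} (Ac : HomComoduleAlgebra Hb A)
    (Bset : Set A) {N : Type} [AddCommGroup N] [Module k N]
    (P : LRHomHopfModule Ac N) :
    Submodule k (A ⊗[k] (coinvSubmoduleOf Hb.one P.coact P.aut : Submodule k N)) :=
  Submodule.span k
    {x | ∃ (n n' n'' : coinvSubmoduleOf Hb.one P.coact P.aut) (a b : A), b ∈ Bset ∧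
      (n' : N) = P.act b n ∧ (n'' : N) = P.aut n ∧
      x = Ac.aut a ⊗ₜ[k] n' - Ac.mul a b ⊗ₜ[k] n''}

/-- The counit at the level of `A ⊗ N^{co H}`: `a ⊗ n ↦ a · n`. -/
def counitPreL {Hb : MonoidalHomBialgebra k H} (Ac : HomComoduleAlgebra Hb A)
    {N : Type} [AddCommGroup N] [Module k N] (P : LRHomHopfModule Ac N) :
    (A ⊗[k] (coinvSubmoduleOf Hb.one P.coact P.aut : Submodule k N)) →ₗ[k] N :=
  TensorProduct.lift (P.act.compl₂ (coinvSubmoduleOf Hb.one P.coact P.aut).subtype)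

/-- Bijectivity of the counit `ε'_N : A ⊗_B N^{co H} → N`. -/
def CounitBijectiveL {Hb : MonoidalHomBialgebra k H} (Ac : HomComoduleAlgebra Hb A)
    (Bset : Set A) {N : Type} [AddCommGroup N] [Module k N]
    (P : LRHomHopfModule Ac N) : Prop :=
  Function.Surjective (counitPreL Ac P) ∧ LinearMap.ker (counitPreL Ac P) = relCoinvL Ac Bset P

/-- A morphism of right `B`-Hom-modules. -/
def IsHomModuleOnHomR {Hb : MonoidalHomBialgebra k H} (Ac : HomComoduleAlgebra Hb A)
    (Bset : Set A) {M₁ M₂ : Type} [AddCommGroup M₁] [Module k M₁] [AddCommGroup M₂] [Module k M₂]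
    (S₁ : HomModuleOn Ac Bset M₁) (S₂ : HomModuleOn Ac Bset M₂) (f : M₁ →ₗ[k] M₂) : Prop :=
  (∀ m, ∀ b ∈ Bset, f (S₁.act m b) = S₂.act (f m) b) ∧ ∀ m, f (S₁.aut m) = S₂.aut (f m)

/-- A morphism of left `B`-Hom-modules. -/
def IsHomModuleOnHomL {Hb : MonoidalHomBialgebra k H} (Ac : HomComoduleAlgebra Hb A)
    (Bset : Set A) {M₁ M₂ : Type} [AddCommGroup M₁] [Module k M₁] [AddCommGroup M₂] [Module k M₂]
    (S₁ : HomLeftModuleOn Ac Bset M₁) (S₂ : HomLeftModuleOn Ac Bset M₂) (f : M₁ →ₗ[k] M₂) : Prop :=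
  (∀ m, ∀ b ∈ Bset, f (S₁.act b m) = S₂.act b (f m)) ∧ ∀ m, f (S₁.aut m) = S₂.aut (f m)

/-- `A` is faithfully flat as a left `B`-Hom-module: the induced functor `− ⊗_B A`
on right `B`-Hom-modules preserves and reflects exactness. -/
def FaithfullyFlatLeftOf {Hb : MonoidalHomBialgebra k H} (Ac : HomComoduleAlgebra Hb A)
    (Bset : Set A) : Prop :=
  ∀ (M₁ M₂ M₃ : Type) [AddCommGroup M₁] [Module k M₁] [AddCommGroup M₂] [Module k M₂]
    [AddCommGroup M₃] [Module k M₃]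
    (S₁ : HomModuleOn Ac Bset M₁) (S₂ : HomModuleOn Ac Bset M₂) (S₃ : HomModuleOn Ac Bset M₃)
    (f : M₁ →ₗ[k] M₂) (g : M₂ →ₗ[k] M₃),
    IsHomModuleOnHomR Ac Bset S₁ S₂ f → IsHomModuleOnHomR Ac Bset S₂ S₃ g →
    ∀ (fbar : ((M₁ ⊗[k] A) ⧸ relSubR Ac.mul Ac.aut Bset S₁.act S₁.aut) →ₗ[k]
        ((M₂ ⊗[k] A) ⧸ relSubR Ac.mul Ac.aut Bset S₂.act S₂.aut))
      (gbar : ((M₂ ⊗[k] A) ⧸ relSubR Ac.mul Ac.aut Bset S₂.act S₂.aut) →ₗ[k]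
        ((M₃ ⊗[k] A) ⧸ relSubR Ac.mul Ac.aut Bset S₃.act S₃.aut)),
      fbar ∘ₗ (relSubR Ac.mul Ac.aut Bset S₁.act S₁.aut).mkQ =
        (relSubR Ac.mul Ac.aut Bset S₂.act S₂.aut).mkQ ∘ₗ TensorProduct.map f LinearMap.id →
      gbar ∘ₗ (relSubR Ac.mul Ac.aut Bset S₂.act S₂.aut).mkQ =
        (relSubR Ac.mul Ac.aut Bset S₃.act S₃.aut).mkQ ∘ₗ TensorProduct.map g LinearMap.id →
      (LinearMap.range f = LinearMap.ker g ↔ LinearMap.range fbar = LinearMap.ker gbar)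

/-- `A` is faithfully flat as a right `B`-Hom-module: the induced functor `A ⊗_B −`
on left `B`-Hom-modules preserves and reflects exactness. -/
def FaithfullyFlatRightOf {Hb : MonoidalHomBialgebra k H} (Ac : HomComoduleAlgebra Hb A)
    (Bset : Set A) : Prop :=
  ∀ (M₁ M₂ M₃ : Type) [AddCommGroup M₁] [Module k M₁] [AddCommGroup M₂] [Module k M₂]
    [AddCommGroup M₃] [Module k M₃]
    (S₁ : HomLeftModuleOn Ac Bset M₁) (S₂ : HomLeftModuleOn Ac Bset M₂)
    (S₃ : HomLeftModuleOn Ac Bset M₃)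
    (f : M₁ →ₗ[k] M₂) (g : M₂ →ₗ[k] M₃),
    IsHomModuleOnHomL Ac Bset S₁ S₂ f → IsHomModuleOnHomL Ac Bset S₂ S₃ g →
    ∀ (fbar : ((A ⊗[k] M₁) ⧸ relSubL Ac.mul Ac.aut Bset S₁.act S₁.aut) →ₗ[k]
        ((A ⊗[k] M₂) ⧸ relSubL Ac.mul Ac.aut Bset S₂.act S₂.aut))
      (gbar : ((A ⊗[k] M₂) ⧸ relSubL Ac.mul Ac.aut Bset S₂.act S₂.aut) →ₗ[k]
        ((A ⊗[k] M₃) ⧸ relSubL Ac.mul Ac.aut Bset S₃.act S₃.aut)),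
      fbar ∘ₗ (relSubL Ac.mul Ac.aut Bset S₁.act S₁.aut).mkQ =
        (relSubL Ac.mul Ac.aut Bset S₂.act S₂.aut).mkQ ∘ₗ TensorProduct.map LinearMap.id f →
      gbar ∘ₗ (relSubL Ac.mul Ac.aut Bset S₂.act S₂.aut).mkQ =
        (relSubL Ac.mul Ac.aut Bset S₃.act S₃.aut).mkQ ∘ₗ TensorProduct.map LinearMap.id g →
      (LinearMap.range f = LinearMap.ker g ↔ LinearMap.range fbar = LinearMap.ker gbar)

/-- `A` is flat as a left `B`-Hom-module: `− ⊗_B A` preserves exactness. -/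
def FlatLeftOf {Hb : MonoidalHomBialgebra k H} (Ac : HomComoduleAlgebra Hb A)
    (Bset : Set A) : Prop :=
  ∀ (M₁ M₂ M₃ : Type) [AddCommGroup M₁] [Module k M₁] [AddCommGroup M₂] [Module k M₂]
    [AddCommGroup M₃] [Module k M₃]
    (S₁ : HomModuleOn Ac Bset M₁) (S₂ : HomModuleOn Ac Bset M₂) (S₃ : HomModuleOn Ac Bset M₃)
    (f : M₁ →ₗ[k] M₂) (g : M₂ →ₗ[k] M₃),
    IsHomModuleOnHomR Ac Bset S₁ S₂ f → IsHomModuleOnHomR Ac Bset S₂ S₃ g →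
    ∀ (fbar : ((M₁ ⊗[k] A) ⧸ relSubR Ac.mul Ac.aut Bset S₁.act S₁.aut) →ₗ[k]
        ((M₂ ⊗[k] A) ⧸ relSubR Ac.mul Ac.aut Bset S₂.act S₂.aut))
      (gbar : ((M₂ ⊗[k] A) ⧸ relSubR Ac.mul Ac.aut Bset S₂.act S₂.aut) →ₗ[k]
        ((M₃ ⊗[k] A) ⧸ relSubR Ac.mul Ac.aut Bset S₃.act S₃.aut)),
      fbar ∘ₗ (relSubR Ac.mul Ac.aut Bset S₁.act S₁.aut).mkQ =
        (relSubR Ac.mul Ac.aut Bset S₂.act S₂.aut).mkQ ∘ₗ TensorProduct.map f LinearMap.id →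
      gbar ∘ₗ (relSubR Ac.mul Ac.aut Bset S₂.act S₂.aut).mkQ =
        (relSubR Ac.mul Ac.aut Bset S₃.act S₃.aut).mkQ ∘ₗ TensorProduct.map g LinearMap.id →
      (LinearMap.range f = LinearMap.ker g → LinearMap.range fbar = LinearMap.ker gbar)

end

/-!
On a monoidal Hom-algebra with product `a * b` and automorphism `β`, the product `β⁻¹ (b * a)` is
associative, and applying the automorphisms to a Hom-coaction makes it coassociative. Everything
is thereby untwisted to an ordinary bialgebra `H`, an ordinary comodule algebra `A` and left modules
which carry compatible automorphisms; injectivity, surjectivity and exactness are unaffected.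

In the untwisted setting write `F` for `M ↦ A ⊗_B M`. If `can` is bijective, then so is
`can_N : F N → N ⊗ H` for every `A`-module `N`. For a Hopf module `N` it carries the image under
`F` of the sequence `N^{co H} → N → N ⊗ H`, given by `n ↦ ρ n - n ⊗ 1`, to the split exact sequence
`N → N ⊗ H → N ⊗ H ⊗ H` of the coaction. Flatness then makes the counit bijective, and the unit
`η_M` is bijective because `F (η_M)` is inverse to the counit of `F M` and `F` reflects exactness.
Conversely, the counit of the cofree Hopf module `A ⊗ H`, whose coinvariants are `A`, is `can`. For
injective `f`, the kernel of `F f` is a Hopf module without nonzero coinvariants, so it vanishes.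
-/

universe u v

noncomputable section

section TensorAct

variable {k : Type v} [CommRing k] {R N P H : Type u} [Ring R] [Algebra k R]
  [AddCommGroup N] [Module k N] [AddCommGroup P] [Module k P] [Ring H]

/-- The action of `R ⊗ H` on `N ⊗ H` given by an action of `R` on `N` and by left
multiplication on `H`. -/
def tensorAct [Algebra k H] (φ : R →ₐ[k] Module.End k N) :
    R ⊗[k] H →ₐ[k] Module.End k (N ⊗[k] H) :=
  (Module.endTensorEndAlgHom (R := k) (S := k) (A := k)).comp
    (Algebra.TensorProduct.map φ (Algebra.lmul k H))

@[simp]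
theorem tensorAct_tmul_tmul [Algebra k H] (φ : R →ₐ[k] Module.End k N) (r : R) (h h' : H) (n : N) :
    tensorAct φ (r ⊗ₜ[k] h) (n ⊗ₜ[k] h') = φ r n ⊗ₜ (h * h') := by
  simp [tensorAct, Module.endTensorEndAlgHom_apply]

theorem tensorAct_tmul_one [Algebra k H] (φ : R →ₐ[k] Module.End k N) (w : R ⊗[k] H) (n : N) :
    tensorAct φ w (n ⊗ₜ[k] 1) = (φ.toLinearMap.flip n).rTensor H w := by
  induction w with
  | zero => simp
  | tmul r h => simp
  | add w w' hw hw' => simp only [map_add, LinearMap.add_apply, hw, hw']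

/-- The coaction of the cofree comodule `N ⊗ H`. -/
def cofreeCoact (k : Type v) [CommRing k] (N H : Type u) [AddCommGroup N] [Module k N] [Ring H]
    [Bialgebra k H] : N ⊗[k] H →ₗ[k] (N ⊗[k] H) ⊗[k] H :=
  (TensorProduct.assoc k N H H).symm.toLinearMap ∘ₗ Coalgebra.comul.lTensor N

theorem rTensor_map {N' P' : Type u} [AddCommGroup N'] [Module k N'] [AddCommGroup P']
    [Module k P'] [Algebra k H] {f : N →ₗ[k] P} {f' : N' →ₗ[k] P'} {g : N →ₗ[k] N'}
    {g' : P →ₗ[k] P'} (hfg : f' ∘ₗ g = g' ∘ₗ f) (α : H →ₗ[k] H) (x : N ⊗[k] H) :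
    f'.rTensor H (TensorProduct.map g α x) = TensorProduct.map g' α (f.rTensor H x) := by
  rw [← LinearMap.comp_apply, ← LinearMap.comp_apply, LinearMap.rTensor_comp_map,
    LinearMap.map_comp_rTensor, hfg]

theorem cofreeCoact_tmul [Bialgebra k H] (n : N) (h : H) :
    cofreeCoact k N H (n ⊗ₜ h) = (TensorProduct.mk k N H n).rTensor H (Coalgebra.comul h) := by
  have assoc_symm_tmul (u : H ⊗[k] H) :
      (TensorProduct.assoc k N H H).symm (n ⊗ₜ u) = (TensorProduct.mk k N H n).rTensor H u := by
    induction u with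
    | zero => simp
    | tmul h₁ h₂ => simp
    | add u v hu hv => simp only [tmul_add, map_add, hu, hv]
  exact assoc_symm_tmul _

theorem cofreeCoact_rTensor [Bialgebra k H] (f : N →ₗ[k] P) (x : N ⊗[k] H) :
    cofreeCoact k P H (f.rTensor H x) = (f.rTensor H).rTensor H (cofreeCoact k N H x) := by
  induction x with
  | zero => simp
  | add x x' hx hx' => simp only [map_add, hx, hx']
  | tmul n h =>
    rw [LinearMap.rTensor_tmul, cofreeCoact_tmul, cofreeCoact_tmul, ← LinearMap.rTensor_comp_apply]
    congr 1

theorem cofreeCoact_coassoc [Bialgebra k H] (x : N ⊗[k] H) :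
    (cofreeCoact k N H).rTensor H (cofreeCoact k N H x) =
      cofreeCoact k (N ⊗[k] H) H (cofreeCoact k N H x) := by
  induction x with
  | zero => simp
  | add x x' hx hx' => simp only [map_add, hx, hx']
  | tmul n h =>
    have cofreeCoact_comp_mk : cofreeCoact k N H ∘ₗ TensorProduct.mk k N H n =
        (TensorProduct.mk k N H n).rTensor H ∘ₗ Coalgebra.comul :=
      LinearMap.ext fun h ↦ cofreeCoact_tmul n h
    have cofreeCoact_comul :
        cofreeCoact k H H (Coalgebra.comul h) = Coalgebra.comul.rTensor H (Coalgebra.comul h) :=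
      Coalgebra.coassoc_symm_apply h
    rw [cofreeCoact_tmul, cofreeCoact_rTensor, cofreeCoact_comul, ← LinearMap.rTensor_comp_apply,
      ← LinearMap.rTensor_comp_apply, cofreeCoact_comp_mk]

theorem rid_lTensor_counit_rTensor [Bialgebra k H] (f : N →ₗ[k] P) (x : N ⊗[k] H) :
    TensorProduct.rid k P (Coalgebra.counit.lTensor P (f.rTensor H x)) =
      f (TensorProduct.rid k N (Coalgebra.counit.lTensor N x)) := by
  induction x with
  | zero => simp
  | add x x' hx hx' => simp only [map_add, hx, hx']
  | tmul n h => simp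

theorem cofreeCoact_counit [Bialgebra k H] (x : N ⊗[k] H) :
    TensorProduct.rid k (N ⊗[k] H) (Coalgebra.counit.lTensor (N ⊗[k] H) (cofreeCoact k N H x)) =
      x := by
  induction x with
  | zero => simp
  | add x x' hx hx' => simp only [map_add, hx, hx']
  | tmul n h => simp [cofreeCoact_tmul, rid_lTensor_counit_rTensor]

theorem rTensor_counit_cofreeCoact [Bialgebra k H] (x : N ⊗[k] H) :
    ((TensorProduct.rid k N).toLinearMap ∘ₗ Coalgebra.counit.lTensor N).rTensor H
      (cofreeCoact k N H x) = x := by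
  induction x with
  | zero => simp
  | add x x' hx hx' => simp only [map_add, hx, hx']
  | tmul n h =>
    have rid_comp_mk :
        ((TensorProduct.rid k N).toLinearMap ∘ₗ Coalgebra.counit.lTensor N) ∘ₗ
          TensorProduct.mk k N H n = LinearMap.toSpanSingleton k N n ∘ₗ Coalgebra.counit := by
      ext h
      simp
    rw [cofreeCoact_tmul, ← LinearMap.rTensor_comp_apply, rid_comp_mk,
      LinearMap.rTensor_comp_apply, Coalgebra.rTensor_counit_comul]
    simp

theorem cofreeCoact_map [Bialgebra k H] (f : N →ₗ[k] P) (α : H ≃ₐc[k] H) (x : N ⊗[k] H) :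
    cofreeCoact k P H (TensorProduct.map f (α : H →ₗ[k] H) x) =
      TensorProduct.map (TensorProduct.map f (α : H →ₗ[k] H)) (α : H →ₗ[k] H)
        (cofreeCoact k N H x) := by
  induction x with
  | zero => simp
  | add x x' hx hx' => simp only [map_add, hx, hx']
  | tmul n h =>
    have comul_aut : Coalgebra.comul (R := k) (α h) =
        TensorProduct.map (α : H →ₗ[k] H) (α : H →ₗ[k] H) (Coalgebra.comul h) :=
      (CoalgHomClass.map_comp_comul_apply α h).symm
    have mk_comp : TensorProduct.mk k P H (f n) ∘ₗ (α : H →ₗ[k] H) =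
        TensorProduct.map f (α : H →ₗ[k] H) ∘ₗ TensorProduct.mk k N H n := rfl
    rw [cofreeCoact_tmul, ← rTensor_map mk_comp, ← comul_aut]
    exact cofreeCoact_tmul (f n) (α h)

theorem tensorAct_rTensor [Algebra k H] {A : Type u} [Ring A] [Algebra k A]
    (φ : R →ₐ[k] Module.End k N) (f : A →ₐ[k] R) (w : A ⊗[k] H) :
    tensorAct φ (f.toLinearMap.rTensor H w) = tensorAct (φ.comp f) w := by
  induction w with
  | zero => simp
  | tmul a h => ext; simp
  | add w w' hw hw' => simp only [map_add, hw, hw']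

theorem tensorAct_lmul [Algebra k H] (w w' : R ⊗[k] H) :
    tensorAct (Algebra.lmul k R) w w' = w * w' := by
  have : tensorAct (Algebra.lmul k R) = Algebra.lmul k (R ⊗[k] H) := by
    ext <;> simp
  exact congrArg (· w') (DFunLike.congr_fun this w)

theorem map_tensorAct [Algebra k H] {R' : Type u} [Ring R'] [Algebra k R']
    {φ : R →ₐ[k] Module.End k N} {ψ : R' →ₐ[k] Module.End k P} {f : N →ₗ[k] P} {σ : R →ₗ[k] R'}
    (hf : ∀ r n, f (φ r n) = ψ (σ r) (f n)) {α : H →ₗ[k] H}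
    (hα : ∀ h h', α (h * h') = α h * α h') (w : R ⊗[k] H) (x : N ⊗[k] H) :
    TensorProduct.map f α (tensorAct φ w x) =
      tensorAct ψ (TensorProduct.map σ α w) (TensorProduct.map f α x) := by
  induction w with
  | zero => simp
  | add w₁ w₂ h₁ h₂ => simp only [map_add, LinearMap.add_apply, h₁, h₂]
  | tmul r h =>
    induction x with
    | zero => simp
    | add x₁ x₂ h₁ h₂ => simp only [map_add, h₁, h₂]
    | tmul n h' => simp [hf, hα]

theorem rTensor_tensorAct [Algebra k H] {φ : R →ₐ[k] Module.End k N}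
    {ψ : R →ₐ[k] Module.End k P} {f : N →ₗ[k] P} (hf : ∀ r n, f (φ r n) = ψ r (f n))
    (w : R ⊗[k] H) (x : N ⊗[k] H) :
    f.rTensor H (tensorAct φ w x) = tensorAct ψ w (f.rTensor H x) := by
  have := map_tensorAct (σ := LinearMap.id) hf (α := LinearMap.id) (fun _ _ ↦ rfl) w x
  rwa [TensorProduct.map_id] at this

theorem rTensor_mul_tmul_one [Algebra k H] (f : R →ₗ[k] N) (w : R ⊗[k] H) (r : R) :
    f.rTensor H (w * r ⊗ₜ 1) = (f ∘ₗ LinearMap.mulRight k r).rTensor H w := by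
  induction w with
  | zero => simp
  | tmul s h => simp
  | add w w' hw hw' => simp only [map_add, add_mul, hw, hw']

theorem cofreeCoact_tensorAct [Bialgebra k H] (φ : R →ₐ[k] Module.End k N) (w : R ⊗[k] H)
    (x : N ⊗[k] H) :
    cofreeCoact k N H (tensorAct φ w x) =
      tensorAct (tensorAct φ) (cofreeCoact k R H w) (cofreeCoact k N H x) := by
  have rTensor_mk_mul (r : R) (n : N) (u u' : H ⊗[k] H) :
      (TensorProduct.mk k N H (φ r n)).rTensor H (u * u') =
        tensorAct (tensorAct φ) ((TensorProduct.mk k R H r).rTensor H u)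
          ((TensorProduct.mk k N H n).rTensor H u') := by
    induction u with
    | zero => simp
    | add u v hu hv => simp only [add_mul, map_add, LinearMap.add_apply, hu, hv]
    | tmul h₁ h₂ =>
      induction u' with
      | zero => simp
      | add u v hu hv => simp only [mul_add, map_add, hu, hv]
      | tmul h₁' h₂' => simp
  induction w with
  | zero => simp
  | add w w' hw hw' => simp only [map_add, LinearMap.add_apply, hw, hw']
  | tmul r h =>
    induction x with
    | zero => simp
    | add x x' hx hx' => simp only [map_add, hx, hx']
    | tmul n h' =>
      simp only [tensorAct_tmul_tmul, cofreeCoact_tmul, Bialgebra.comul_mul, rTensor_mk_mul]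

end TensorAct

/-- A module `M` over an algebra `R` carrying an automorphism `σ`, together with an automorphism of
`M` that is semilinear along `σ`. The module structure is recorded as an action by endomorphisms. -/
structure EquivariantModule {k : Type v} [CommRing k] {R : Type u} [Ring R] [Algebra k R]
    (σ : R ≃ₐ[k] R) (M : Type u) [AddCommGroup M] [Module k M] where
  act : R →ₐ[k] Module.End k M
  aut : M ≃ₗ[k] M
  aut_act : ∀ r m, aut (act r m) = act (σ r) (aut m)

namespace EquivariantModule

variable {k : Type v} [CommRing k] {R : Type u} [Ring R] [Algebra k R] {σ : R ≃ₐ[k] R}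
  {M N P : Type u} [AddCommGroup M] [Module k M] [AddCommGroup N] [Module k N]
  [AddCommGroup P] [Module k P]

theorem aut_symm_act (S : EquivariantModule σ M) (r : R) (m : M) :
    S.aut.symm (S.act r m) = S.act (σ.symm r) (S.aut.symm m) := by
  rw [LinearEquiv.symm_apply_eq, S.aut_act]
  simp

/-- The map `r ↦ r • m`. -/
def orbit (S : EquivariantModule σ M) : M →ₗ[k] R →ₗ[k] M :=
  S.act.toLinearMap.flip

@[simp]
theorem orbit_apply (S : EquivariantModule σ M) (m : M) (r : R) : S.orbit m r = S.act r m :=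
  rfl

theorem orbit_act (S : EquivariantModule σ M) (r : R) (m : M) :
    S.orbit (S.act r m) = S.orbit m ∘ₗ LinearMap.mulRight k r := by
  ext s
  simp

/-- A linear map commuting with the actions and with the automorphisms. -/
structure IsHom (S : EquivariantModule σ M) (T : EquivariantModule σ N) (f : M →ₗ[k] N) :
    Prop where
  map_act : ∀ r m, f (S.act r m) = T.act r (f m)
  map_aut : ∀ m, f (S.aut m) = T.aut (f m)

theorem IsHom.symm {S : EquivariantModule σ M} {T : EquivariantModule σ N} {e : M ≃ₗ[k] N}
    (he : IsHom S T e.toLinearMap) : IsHom T S e.symm.toLinearMap where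
  map_act r n := e.injective (by simpa using (he.map_act r (e.symm n)).symm)
  map_aut n := e.injective (by simpa using (he.map_aut (e.symm n)).symm)

/-- `R` as a module over itself. -/
def regular (σ : R ≃ₐ[k] R) : EquivariantModule σ R where
  act := Algebra.lmul k R
  aut := σ.toLinearEquiv
  aut_act r m := by simp

@[simp]
theorem regular_act (r s : R) : (regular σ).act r s = r * s :=
  rfl

/-- The zero module. -/
def zero (σ : R ≃ₐ[k] R) : EquivariantModule σ PUnit.{u + 1} where
  act := AlgHom.ofLinearMap 0 (Subsingleton.elim _ _) fun _ _ ↦ Subsingleton.elim _ _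
  aut := LinearEquiv.refl k _
  aut_act _ _ := rfl

theorem isHom_zero (S : EquivariantModule σ M) (T : EquivariantModule σ N) : IsHom S T 0 where
  map_act r m := by simp
  map_aut m := by simp

section KerCoker

variable {S : EquivariantModule σ M} {T : EquivariantModule σ N} {f : M →ₗ[k] N}

theorem IsHom.map_ker (hf : IsHom S T f) :
    (LinearMap.ker f).map S.aut.toLinearMap = LinearMap.ker f := by
  ext m
  rw [Submodule.mem_map_equiv, LinearMap.mem_ker, LinearMap.mem_ker,
    ← T.aut.map_eq_zero_iff, ← hf.map_aut, LinearEquiv.apply_symm_apply]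

theorem IsHom.map_range (hf : IsHom S T f) :
    (LinearMap.range f).map T.aut.toLinearMap = LinearMap.range f := by
  have intertwine : T.aut.toLinearMap ∘ₗ f = f ∘ₗ S.aut.toLinearMap :=
    LinearMap.ext fun m ↦ (hf.map_aut m).symm
  rw [← LinearMap.range_comp, intertwine, LinearMap.range_comp_of_range_eq_top _ S.aut.range]

/-- The kernel of a homomorphism. -/
def ker (hf : IsHom S T f) : EquivariantModule σ (LinearMap.ker f) where
  act := AlgHom.ofLinearMap
    { toFun r := (S.act r).restrict (p := LinearMap.ker f) (q := LinearMap.ker f) fun m hm ↦ by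
        rw [LinearMap.mem_ker, hf.map_act, LinearMap.mem_ker.mp hm, map_zero]
      map_add' r s := by ext; simp
      map_smul' c r := by ext; simp }
    (by ext; simp) (fun r s ↦ by ext; simp)
  aut := LinearEquiv.ofSubmodules S.aut _ _ hf.map_ker
  aut_act r m := Subtype.ext (S.aut_act r m)

theorem isHom_subtype_ker (hf : IsHom S T f) : IsHom (ker hf) S (LinearMap.ker f).subtype :=
  ⟨fun _ _ ↦ rfl, fun _ ↦ rfl⟩

@[simp]
theorem coe_ker_act (hf : IsHom S T f) (r : R) (m : LinearMap.ker f) :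
    ((ker hf).act r m : M) = S.act r m :=
  rfl

/-- The cokernel of a homomorphism. -/
def coker (hf : IsHom S T f) : EquivariantModule σ (N ⧸ LinearMap.range f) where
  act := AlgHom.ofLinearMap
    { toFun r := (LinearMap.range f).mapQ (LinearMap.range f) (T.act r) <| by
        rintro _ ⟨m, rfl⟩
        exact ⟨S.act r m, hf.map_act r m⟩
      map_add' r s := by ext; simp
      map_smul' c r := by ext; simp }
    (by ext; simp) (fun r s ↦ by ext; simp)
  aut := Submodule.Quotient.equiv _ _ T.aut hf.map_range
  aut_act r := by
    rintro ⟨n⟩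
    exact congrArg (Submodule.Quotient.mk (p := LinearMap.range f)) (T.aut_act r n)

theorem isHom_mkQ_range (hf : IsHom S T f) : IsHom T (coker hf) (LinearMap.range f).mkQ :=
  ⟨fun _ _ ↦ rfl, fun _ ↦ rfl⟩

theorem IsHom.liftQ_range (hf : IsHom S T f) {U : EquivariantModule σ P} {g : N →ₗ[k] P}
    (hg : IsHom T U g) (h : LinearMap.range f ≤ LinearMap.ker g) :
    IsHom (coker hf) U ((LinearMap.range f).liftQ g h) where
  map_act r := by
    rintro ⟨n⟩
    exact hg.map_act r n
  map_aut := by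
    rintro ⟨n⟩
    exact hg.map_aut n

end KerCoker

end EquivariantModule

/-! ### Induction and the Galois map -/

/-- An `H`-comodule algebra `A` receiving an algebra map from `B` whose image consists of
coinvariants, with compatible automorphisms `τ`, `β`, `α` of `B`, `A`, `H`. -/
structure ComoduleExtension {k : Type v} [CommRing k] {B A H : Type u} [Ring B] [Algebra k B]
    [Ring A] [Algebra k A] [Ring H] [Bialgebra k H] (τ : B ≃ₐ[k] B) (β : A ≃ₐ[k] A)
    (α : H ≃ₐc[k] H) where
  incl : B →ₐ[k] A
  coact : A →ₐ[k] A ⊗[k] H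
  coassoc : ∀ a, coact.toLinearMap.rTensor H (coact a) = cofreeCoact k A H (coact a)
  counit : ∀ a, TensorProduct.rid k A (Coalgebra.counit.lTensor A (coact a)) = a
  aut_incl : ∀ b, β (incl b) = incl (τ b)
  coact_incl : ∀ b, coact (incl b) = incl b ⊗ₜ 1
  coact_aut : ∀ a, coact (β a) =
    TensorProduct.map β.toLinearMap (α : H →ₗ[k] H) (coact a)

/-- An `A`-module with an `A`-semilinear `H`-coaction and a compatible automorphism. -/
structure HopfModule {k : Type v} [CommRing k] {B A H : Type u} [Ring B] [Algebra k B]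
    [Ring A] [Algebra k A] [Ring H] [Bialgebra k H] {τ : B ≃ₐ[k] B} {β : A ≃ₐ[k] A}
    {α : H ≃ₐc[k] H} (E : ComoduleExtension τ β α) (N : Type u) [AddCommGroup N] [Module k N]
    extends EquivariantModule β N where
  coact : N →ₗ[k] N ⊗[k] H
  coassoc : ∀ n, coact.rTensor H (coact n) = cofreeCoact k N H (coact n)
  counit : ∀ n, TensorProduct.rid k N (Coalgebra.counit.lTensor N (coact n)) = n
  coact_aut : ∀ n, coact (aut n) = TensorProduct.map aut.toLinearMap (α : H →ₗ[k] H) (coact n)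
  coact_act : ∀ a n, coact (act a n) = tensorAct act (E.coact a) (coact n)

namespace ComoduleExtension

open EquivariantModule

variable {k : Type v} [CommRing k] {B A H : Type u} [Ring B] [Algebra k B]
  [Ring A] [Algebra k A] [Ring H] [Bialgebra k H] {τ : B ≃ₐ[k] B} {β : A ≃ₐ[k] A}
  {α : H ≃ₐc[k] H} (E : ComoduleExtension τ β α)
  {M N P : Type u} [AddCommGroup M] [Module k M] [AddCommGroup N] [Module k N]
  [AddCommGroup P] [Module k P]

section Induction

variable (S : EquivariantModule τ M) (T : EquivariantModule τ N) (U : EquivariantModule τ P)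

/-- The relations `b m ⊗ a = m ⊗ a b` that cut out `A ⊗_B M`. -/
def inducedRel : Submodule k (M ⊗[k] A) :=
  Submodule.span k {x | ∃ b m a, x = S.act b m ⊗ₜ a - m ⊗ₜ (a * E.incl b)}

/-- The induced module `A ⊗_B M`, written with the two factors exchanged. -/
abbrev Induced : Type u :=
  (M ⊗[k] A) ⧸ E.inducedRel S

/-- The class of `m ⊗ a`. -/
def tmul : M →ₗ[k] A →ₗ[k] E.Induced S :=
  (TensorProduct.mk k M A).compr₂ (E.inducedRel S).mkQ

theorem tmul_act (b : B) (m : M) (a : A) : E.tmul S (S.act b m) a = E.tmul S m (a * E.incl b) :=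
  (Submodule.Quotient.eq _).mpr (Submodule.subset_span ⟨b, m, a, rfl⟩)

variable {E S} in
theorem induced_hom_ext {f g : E.Induced S →ₗ[k] P}
    (h : ∀ m a, f (E.tmul S m a) = g (E.tmul S m a)) : f = g :=
  Submodule.linearMap_qext _ (TensorProduct.ext' h)

/-- The linear map on `A ⊗_B M` induced by a balanced bilinear map. -/
def lift (f : M →ₗ[k] A →ₗ[k] P) (hf : ∀ b m a, f (S.act b m) a = f m (a * E.incl b)) :
    E.Induced S →ₗ[k] P :=
  (E.inducedRel S).liftQ (TensorProduct.lift f) <| Submodule.span_le.mpr <| by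
    rintro _ ⟨b, m, a, rfl⟩
    simp [hf]

@[simp]
theorem lift_tmul (f : M →ₗ[k] A →ₗ[k] P) (hf : ∀ b m a, f (S.act b m) a = f m (a * E.incl b))
    (m : M) (a : A) : E.lift S f hf (E.tmul S m a) = f m a :=
  rfl

variable {S T U}

/-- The map `A ⊗_B f`. -/
def map {f : M →ₗ[k] N} (hf : IsHom S T f) : E.Induced S →ₗ[k] E.Induced T :=
  E.lift S (E.tmul T ∘ₗ f) fun b m a ↦ by simp [hf.map_act, tmul_act]

@[simp]
theorem map_tmul {f : M →ₗ[k] N} (hf : IsHom S T f) (m : M) (a : A) :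
    E.map hf (E.tmul S m a) = E.tmul T (f m) a :=
  rfl

theorem map_bijective {f : M →ₗ[k] N} (hf : IsHom S T f) (hbij : Function.Bijective f) :
    Function.Bijective (E.map hf) := by
  let e := LinearEquiv.ofBijective f hbij
  have he : IsHom S T e.toLinearMap := hf
  refine Function.bijective_iff_has_inverse.mpr ⟨E.map he.symm, fun x ↦ ?_, fun y ↦ ?_⟩
  · have : E.map he.symm ∘ₗ E.map hf = LinearMap.id :=
      induced_hom_ext fun m a ↦ congrArg (E.tmul S · a) (e.symm_apply_apply m)
    exact LinearMap.congr_fun this x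
  · have : E.map hf ∘ₗ E.map he.symm = LinearMap.id :=
      induced_hom_ext fun n a ↦ congrArg (E.tmul T · a) (e.apply_symm_apply n)
    exact LinearMap.congr_fun this y

theorem exact_map_mkQ_range {f : M →ₗ[k] N} (hf : IsHom S T f) :
    Function.Exact (E.map hf) (E.map (isHom_mkQ_range hf)) := by
  let split : E.Induced (coker hf) →ₗ[k] E.Induced T ⧸ LinearMap.range (E.map hf) :=
    E.lift (coker hf)
      ((LinearMap.range f).liftQ ((E.tmul T).compr₂ (LinearMap.range (E.map hf)).mkQ) <| by
        rintro _ ⟨m, rfl⟩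
        ext a
        exact (Submodule.Quotient.mk_eq_zero _).mpr ⟨E.tmul S m a, rfl⟩)
      (by
        rintro b ⟨n⟩ a
        exact congrArg (LinearMap.range (E.map hf)).mkQ (E.tmul_act T b n a))
  have split_map : split ∘ₗ E.map (isHom_mkQ_range hf) = (LinearMap.range (E.map hf)).mkQ :=
    induced_hom_ext fun _ _ ↦ rfl
  refine fun x ↦ ⟨fun hx ↦ ?_, ?_⟩
  · have : (LinearMap.range (E.map hf)).mkQ x = 0 := by
      rw [← split_map, LinearMap.comp_apply, hx, map_zero]
    simpa using this
  · rintro ⟨y, rfl⟩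
    have : E.map (isHom_mkQ_range hf) ∘ₗ E.map hf = 0 := induced_hom_ext fun m a ↦ by
      simp [(Submodule.Quotient.mk_eq_zero _).mpr (LinearMap.mem_range_self f m)]
    exact LinearMap.congr_fun this y

end Induction

/-- The functor `A ⊗_B -` on equivariant `B`-modules preserves and reflects exact sequences. -/
def FaithfullyFlat : Prop :=
  ∀ ⦃M₁ M₂ M₃ : Type u⦄ [AddCommGroup M₁] [Module k M₁] [AddCommGroup M₂] [Module k M₂]
    [AddCommGroup M₃] [Module k M₃] ⦃S₁ : EquivariantModule τ M₁⦄ ⦃S₂ : EquivariantModule τ M₂⦄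
    ⦃S₃ : EquivariantModule τ M₃⦄ ⦃f : M₁ →ₗ[k] M₂⦄ ⦃g : M₂ →ₗ[k] M₃⦄
    (hf : IsHom S₁ S₂ f) (hg : IsHom S₂ S₃ g),
    Function.Exact f g ↔ Function.Exact (E.map hf) (E.map hg)

section FaithfullyFlat

variable {E} {S : EquivariantModule τ M} {T : EquivariantModule τ N} {f : M →ₗ[k] N}

theorem map_zero : E.map (isHom_zero S T) = 0 :=
  induced_hom_ext fun _ _ ↦ by simp

theorem FaithfullyFlat.map_injective_iff (hE : E.FaithfullyFlat) (hf : IsHom S T f) :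
    Function.Injective (E.map hf) ↔ Function.Injective f := by
  have := hE (isHom_zero (zero τ) S) hf
  rwa [map_zero, LinearMap.exact_zero_iff_injective, LinearMap.exact_zero_iff_injective,
    iff_comm] at this

theorem FaithfullyFlat.map_surjective_iff (hE : E.FaithfullyFlat) (hf : IsHom S T f) :
    Function.Surjective (E.map hf) ↔ Function.Surjective f := by
  have := hE hf (isHom_zero T (zero τ))
  rwa [map_zero, LinearMap.exact_zero_iff_surjective, LinearMap.exact_zero_iff_surjective,
    iff_comm] at this

theorem FaithfullyFlat.map_bijective_iff (hE : E.FaithfullyFlat) (hf : IsHom S T f) :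
    Function.Bijective (E.map hf) ↔ Function.Bijective f :=
  and_congr (hE.map_injective_iff hf) (hE.map_surjective_iff hf)

end FaithfullyFlat

section Galois

/-- Restriction of scalars along `B → A`. -/
def restrict (T : EquivariantModule β N) : EquivariantModule τ N where
  act := T.act.comp E.incl
  aut := T.aut
  aut_act b n := by simp [T.aut_act, E.aut_incl]

@[simp]
theorem restrict_act (T : EquivariantModule β N) (b : B) (n : N) :
    (E.restrict T).act b n = T.act (E.incl b) n :=
  rfl

variable (T : EquivariantModule β N)

/-- The canonical map `A ⊗_B N → N ⊗ H`, `a ⊗ n ↦ a₀ n ⊗ a₁`, of an `A`-module `N`. -/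
def can : E.Induced (E.restrict T) →ₗ[k] N ⊗[k] H :=
  E.lift _ ((LinearMap.rTensorHom H ∘ₗ T.orbit).compl₂ E.coact.toLinearMap) fun b n a ↦ by
    simp [orbit_act, rTensor_mul_tmul_one, E.coact_incl]

@[simp]
theorem can_tmul (n : N) (a : A) :
    E.can T (E.tmul _ n a) = (T.orbit n).rTensor H (E.coact a) :=
  rfl

/-- The canonical map `A ⊗_B A → A ⊗ H` is bijective. -/
def IsGalois : Prop :=
  Function.Bijective (E.can (regular β))

theorem can_regular_one_tmul (a : A) : E.can (regular β) (E.tmul _ 1 a) = E.coact a := by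
  have orbit_one : (regular β).orbit 1 = LinearMap.id := by
    ext
    simp
  rw [can_tmul, orbit_one, LinearMap.rTensor_id, LinearMap.id_apply]

/-- The map `A ⊗_B A → A ⊗_B N` induced by `a ↦ a n`, as a function of both arguments. -/
def inducedOrbit : E.Induced (E.restrict (regular β)) →ₗ[k] N →ₗ[k] E.Induced (E.restrict T) :=
  E.lift _
    (LinearMap.mk₂ k (fun a' a ↦ (E.tmul (E.restrict T)).flip a ∘ₗ T.act a')
      (fun _ _ _ ↦ by ext; simp) (fun _ _ _ ↦ by ext; simp) (fun _ _ _ ↦ by ext; simp)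
      (fun _ _ _ ↦ by ext; simp))
    fun b a' a ↦ LinearMap.ext fun n ↦ by
      simpa using E.tmul_act (E.restrict T) b (T.act a' n) a

@[simp]
theorem inducedOrbit_tmul (a' a : A) (n : N) :
    E.inducedOrbit T (E.tmul _ a' a) n = E.tmul _ (T.act a' n) a :=
  rfl

theorem can_inducedOrbit (x : E.Induced (E.restrict (regular β))) (n : N) :
    E.can T (E.inducedOrbit T x n) = (T.orbit n).rTensor H (E.can (regular β) x) := by
  have orbit_comp (a' : A) : T.orbit (T.act a' n) = T.orbit n ∘ₗ (regular β).orbit a' := by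
    ext a
    simp
  have : E.can T ∘ₗ (E.inducedOrbit T).flip n =
      (T.orbit n).rTensor H ∘ₗ E.can (regular β) := induced_hom_ext fun a' a ↦ by
    simp [orbit_comp, LinearMap.rTensor_comp]
  exact LinearMap.congr_fun this x

theorem inducedOrbit_inducedOrbit (x : E.Induced (E.restrict (regular β))) (a : A) (n : N) :
    E.inducedOrbit T (E.inducedOrbit (regular β) x a) n = E.inducedOrbit T x (T.act a n) := by
  have : (E.inducedOrbit T).flip n ∘ₗ (E.inducedOrbit (regular β)).flip a =
      (E.inducedOrbit T).flip (T.act a n) := induced_hom_ext fun a' a'' ↦ by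
    simp
  exact LinearMap.congr_fun this x

variable {E}

theorem IsGalois.can_bijective (hE : E.IsGalois) : Function.Bijective (E.can T) := by
  let e := LinearEquiv.ofBijective _ hE
  have symm_tmul (a : A) (h : H) :
      e.symm (a ⊗ₜ h) = E.inducedOrbit (regular β) (e.symm (1 ⊗ₜ h)) a := by
    refine e.symm_apply_eq.mpr (Eq.symm ?_)
    calc E.can (regular β) (E.inducedOrbit (regular β) (e.symm (1 ⊗ₜ h)) a)
        = ((regular β).orbit a).rTensor H (e (e.symm (1 ⊗ₜ h))) := E.can_inducedOrbit _ _ _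
      _ = a ⊗ₜ h := by simp
  let inv : N ⊗[k] H →ₗ[k] E.Induced (E.restrict T) :=
    TensorProduct.lift
      ((E.inducedOrbit T ∘ₗ e.symm.toLinearMap ∘ₗ TensorProduct.mk k A H 1).flip)
  have inv_rTensor (n : N) (w : A ⊗[k] H) :
      inv ((T.orbit n).rTensor H w) = E.inducedOrbit T (e.symm w) n := by
    induction w with
    | zero => simp
    | add w w' hw hw' => simp only [_root_.map_add, LinearMap.add_apply, hw, hw']
    | tmul a h =>
      rw [symm_tmul, inducedOrbit_inducedOrbit]
      simp [inv]
  refine Function.bijective_iff_has_inverse.mpr ⟨inv, fun x ↦ ?_, fun y ↦ ?_⟩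
  · have : inv ∘ₗ E.can T = LinearMap.id := induced_hom_ext fun n a ↦ by
      have : e.symm (E.coact a) = E.tmul _ 1 a :=
        e.symm_apply_eq.mpr (E.can_regular_one_tmul a).symm
      simp [inv_rTensor, this]
    exact LinearMap.congr_fun this x
  · have : E.can T ∘ₗ inv = LinearMap.id := TensorProduct.ext' fun n h ↦ by
      have : E.can (regular β) (e.symm (1 ⊗ₜ h)) = 1 ⊗ₜ h := e.apply_symm_apply _
      simp [inv, can_inducedOrbit, this]
    exact LinearMap.congr_fun this y

end Galois

end ComoduleExtension

/-! ### Hopf modules -/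

namespace ComoduleExtension

open EquivariantModule

variable {k : Type v} [CommRing k] {B A H : Type u} [Ring B] [Algebra k B]
  [Ring A] [Algebra k A] [Ring H] [Bialgebra k H] {τ : B ≃ₐ[k] B} {β : A ≃ₐ[k] A}
  {α : H ≃ₐc[k] H} (E : ComoduleExtension τ β α)
  {M N : Type u} [AddCommGroup M] [Module k M] [AddCommGroup N] [Module k N]

section DiagonalAction

variable (T : EquivariantModule β N)

/-- The diagonal action `a (n ⊗ h) = a₀ n ⊗ a₁ h` on `N ⊗ H`. -/
def diagonal : EquivariantModule β (N ⊗[k] H) where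
  act := (tensorAct T.act).comp E.coact
  aut := TensorProduct.congr T.aut (α : H ≃ₗ[k] H)
  aut_act a x := by
    rw [AlgHom.comp_apply, AlgHom.comp_apply, E.coact_aut]
    exact map_tensorAct (f := T.aut.toLinearMap) (σ := β.toLinearMap) T.aut_act (map_mul α)
      (E.coact a) x

/-- The diagonal module `N ⊗ H` with the cofree coaction. -/
def cofree : HopfModule E (N ⊗[k] H) where
  toEquivariantModule := E.diagonal T
  coact := cofreeCoact k N H
  coassoc x := cofreeCoact_coassoc x
  counit := cofreeCoact_counit
  coact_aut := cofreeCoact_map T.aut.toLinearMap α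
  coact_act a x := by
    change cofreeCoact k N H (tensorAct T.act (E.coact a) x) =
      tensorAct ((tensorAct T.act).comp E.coact) (E.coact a) (cofreeCoact k N H x)
    rw [cofreeCoact_tensorAct, ← tensorAct_rTensor, E.coassoc]

end DiagonalAction

section Induce

variable (S : EquivariantModule τ M)

/-- Left multiplication by `a'` on `A ⊗_B M`. -/
def inducedAct (a' : A) : E.Induced S →ₗ[k] E.Induced S :=
  E.lift S ((E.tmul S).compl₂ (LinearMap.mulLeft k a')) fun b m a ↦ by
    simp [tmul_act, mul_assoc]

@[simp]
theorem inducedAct_tmul (a a' : A) (m : M) :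
    E.inducedAct S a' (E.tmul S m a) = E.tmul S m (a' * a) :=
  rfl

/-- The automorphism `a ⊗ m ↦ β a ⊗ μ m` of `A ⊗_B M`, with `μ` the automorphism of `M`. -/
def inducedAut : E.Induced S ≃ₗ[k] E.Induced S :=
  LinearEquiv.ofLinearMap
    (E.lift S ((E.tmul S).compl₁₂ S.aut.toLinearMap β.toLinearMap) fun b m a ↦ by
      simp [S.aut_act, E.aut_incl, tmul_act])
    (E.lift S ((E.tmul S).compl₁₂ S.aut.symm.toLinearMap β.symm.toLinearMap) fun b m a ↦ by
      have : β.symm (E.incl b) = E.incl (τ.symm b) := by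
        rw [AlgEquiv.symm_apply_eq, E.aut_incl, AlgEquiv.apply_symm_apply]
      simp [S.aut_symm_act, this, tmul_act])
    (induced_hom_ext fun _ _ ↦ by simp)
    (induced_hom_ext fun _ _ ↦ by simp)

@[simp]
theorem inducedAut_tmul (a : A) (m : M) :
    E.inducedAut S (E.tmul S m a) = E.tmul S (S.aut m) (β a) :=
  rfl

/-- The `A`-module `A ⊗_B M`. -/
def inducedModule : EquivariantModule β (E.Induced S) where
  act := AlgHom.ofLinearMap
    { toFun := E.inducedAct S
      map_add' a a' := induced_hom_ext fun _ _ ↦ by simp [add_mul]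
      map_smul' c a := induced_hom_ext fun _ _ ↦ by simp }
    (induced_hom_ext fun _ _ ↦ by simp)
    (fun a a' ↦ induced_hom_ext fun _ _ ↦ by simp [mul_assoc])
  aut := E.inducedAut S
  aut_act a' x := by
    have : (E.inducedAut S).toLinearMap ∘ₗ E.inducedAct S a' =
        E.inducedAct S (β a') ∘ₗ (E.inducedAut S).toLinearMap :=
      induced_hom_ext fun _ _ ↦ by simp
    exact LinearMap.congr_fun this x

/-- The coaction `a ⊗ m ↦ (a₀ ⊗ m) ⊗ a₁` on `A ⊗_B M`. -/
def inducedCoact : E.Induced S →ₗ[k] E.Induced S ⊗[k] H :=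
  E.lift S ((LinearMap.rTensorHom H ∘ₗ E.tmul S).compl₂ E.coact.toLinearMap) fun b m a ↦ by
    have : E.tmul S (S.act b m) = E.tmul S m ∘ₗ LinearMap.mulRight k (E.incl b) :=
      LinearMap.ext (E.tmul_act S b m)
    simp [this, rTensor_mul_tmul_one, E.coact_incl]

@[simp]
theorem inducedCoact_tmul (m : M) (a : A) :
    E.inducedCoact S (E.tmul S m a) = (E.tmul S m).rTensor H (E.coact a) :=
  rfl

/-- The Hopf module `A ⊗_B M`. -/
def induce : HopfModule E (E.Induced S) where
  toEquivariantModule := E.inducedModule S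
  coact := E.inducedCoact S
  coassoc x := by
    have : (E.inducedCoact S).rTensor H ∘ₗ E.inducedCoact S =
        cofreeCoact k (E.Induced S) H ∘ₗ E.inducedCoact S := by
      refine induced_hom_ext (P := (E.Induced S ⊗[k] H) ⊗[k] H) fun m a ↦ ?_
      have inducedCoact_comp_tmul :
          E.inducedCoact S ∘ₗ E.tmul S m = (E.tmul S m).rTensor H ∘ₗ E.coact.toLinearMap := rfl
      change (E.inducedCoact S).rTensor H ((E.tmul S m).rTensor H (E.coact a)) =
        cofreeCoact k _ H ((E.tmul S m).rTensor H (E.coact a))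
      rw [cofreeCoact_rTensor, ← E.coassoc, ← LinearMap.rTensor_comp_apply,
        ← LinearMap.rTensor_comp_apply, inducedCoact_comp_tmul]
    exact LinearMap.congr_fun this x
  counit x := by
    have : (TensorProduct.rid k (E.Induced S)).toLinearMap ∘ₗ
        Coalgebra.counit.lTensor (E.Induced S) ∘ₗ E.inducedCoact S = LinearMap.id :=
      induced_hom_ext fun m a ↦ by simp [rid_lTensor_counit_rTensor, E.counit]
    exact LinearMap.congr_fun this x
  coact_aut x := by
    have : E.inducedCoact S ∘ₗ (E.inducedAut S).toLinearMap =
        TensorProduct.map (E.inducedAut S).toLinearMap (α : H →ₗ[k] H) ∘ₗ E.inducedCoact S :=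
      induced_hom_ext fun m a ↦ by
        have tmul_comp : E.tmul S (S.aut m) ∘ₗ β.toLinearMap =
            (E.inducedAut S).toLinearMap ∘ₗ E.tmul S m := rfl
        exact (congrArg _ (E.coact_aut a)).trans (rTensor_map tmul_comp _ (E.coact a))
    exact LinearMap.congr_fun this x
  coact_act a' x := by
    have : E.inducedCoact S ∘ₗ E.inducedAct S a' =
        tensorAct (E.inducedModule S).act (E.coact a') ∘ₗ E.inducedCoact S :=
      induced_hom_ext fun m a ↦ by
        simp only [LinearMap.comp_apply, inducedAct_tmul, inducedCoact_tmul, map_mul,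
          ← tensorAct_lmul]
        exact rTensor_tensorAct (fun _ _ ↦ rfl) _ _
    exact LinearMap.congr_fun this x

end Induce

end ComoduleExtension

namespace HopfModule

open EquivariantModule ComoduleExtension

variable {k : Type v} [CommRing k] {B A H : Type u} [Ring B] [Algebra k B]
  [Ring A] [Algebra k A] [Ring H] [Bialgebra k H] {τ : B ≃ₐ[k] B} {β : A ≃ₐ[k] A}
  {α : H ≃ₐc[k] H} {E : ComoduleExtension τ β α}
  {M N : Type u} [AddCommGroup M] [Module k M] [AddCommGroup N] [Module k N]

section Coinvariants

variable (P : HopfModule E N)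

theorem coact_injective : Function.Injective P.coact :=
  Function.LeftInverse.injective
    (g := fun x ↦ TensorProduct.rid k N (Coalgebra.counit.lTensor N x)) P.counit

/-- The map `n ↦ n₀ ⊗ n₁ - n ⊗ 1`, whose kernel consists of the coinvariants. -/
def defect : N →ₗ[k] N ⊗[k] H :=
  P.coact - (TensorProduct.mk k N H).flip 1

@[simp]
theorem defect_apply (n : N) : P.defect n = P.coact n - n ⊗ₜ 1 :=
  rfl

theorem isHom_defect :
    IsHom (E.restrict P.toEquivariantModule) (E.restrict (E.diagonal P.toEquivariantModule))
      P.defect where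
  map_act b n := by
    change P.coact (P.act (E.incl b) n) - _ =
      tensorAct P.act (E.coact (E.incl b)) (P.coact n - n ⊗ₜ 1)
    simp [P.coact_act, E.coact_incl]
  map_aut n := by
    change P.coact (P.aut n) - P.aut n ⊗ₜ 1 =
      TensorProduct.map P.aut.toLinearMap (α : H →ₗ[k] H) (P.coact n - n ⊗ₜ 1)
    simp [P.coact_aut]

/-- The coinvariants of a Hopf module. -/
abbrev coinvariants : Submodule k N :=
  LinearMap.ker P.defect

theorem mem_coinvariants {n : N} : n ∈ P.coinvariants ↔ P.coact n = n ⊗ₜ 1 :=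
  sub_eq_zero

/-- The coinvariants as a `B`-module. -/
def coinvariantsModule : EquivariantModule τ P.coinvariants :=
  EquivariantModule.ker P.isHom_defect

theorem isHom_subtype_coinvariants :
    IsHom P.coinvariantsModule (E.restrict P.toEquivariantModule) P.coinvariants.subtype :=
  isHom_subtype_ker P.isHom_defect

/-- The counit `A ⊗_B N^co → N`, `a ⊗ n ↦ a n`. -/
def counitMap : E.Induced P.coinvariantsModule →ₗ[k] N :=
  E.lift _ (P.orbit ∘ₗ P.coinvariants.subtype) fun b n a ↦ by
    simp [coinvariantsModule]

end Coinvariants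

/-- A homomorphism of equivariant modules that is also colinear. -/
structure IsHom (P : HopfModule E M) (Q : HopfModule E N) (f : M →ₗ[k] N) : Prop extends
    EquivariantModule.IsHom P.toEquivariantModule Q.toEquivariantModule f where
  map_coact : ∀ m, Q.coact (f m) = f.rTensor H (P.coact m)

section Ker

variable [Module.Flat k H] {P : HopfModule E M} {Q : HopfModule E N} {f : M →ₗ[k] N}

theorem IsHom.coact_mem_range (hf : IsHom P Q f) (m : LinearMap.ker f) :
    P.coact m ∈ LinearMap.range ((LinearMap.ker f).subtype.rTensor H) := by
  have exact_rTensor : Function.Exact ((LinearMap.ker f).subtype.rTensor H) (f.rTensor H) :=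
    Module.Flat.rTensor_exact H (LinearMap.exact_subtype_ker_map f)
  refine (exact_rTensor _).mp ?_
  rw [← hf.map_coact, m.2, _root_.map_zero]

theorem rTensor_subtype_injective (K : Submodule k M) :
    Function.Injective (K.subtype.rTensor H) :=
  Module.Flat.rTensor_preserves_injective_linearMap _ K.injective_subtype

/-- The coaction on the kernel of a homomorphism. -/
def kerCoact (hf : IsHom P Q f) : LinearMap.ker f →ₗ[k] LinearMap.ker f ⊗[k] H :=
  LinearMap.codRestrictOfInjective (P.coact ∘ₗ (LinearMap.ker f).subtype)
    ((LinearMap.ker f).subtype.rTensor H) (rTensor_subtype_injective _) hf.coact_mem_range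

theorem rTensor_subtype_comp_kerCoact (hf : IsHom P Q f) :
    (LinearMap.ker f).subtype.rTensor H ∘ₗ kerCoact hf = P.coact ∘ₗ (LinearMap.ker f).subtype :=
  LinearMap.codRestrictOfInjective_comp ..

theorem rTensor_subtype_kerCoact (hf : IsHom P Q f) (m : LinearMap.ker f) :
    (LinearMap.ker f).subtype.rTensor H (kerCoact hf m) = P.coact m :=
  LinearMap.congr_fun (rTensor_subtype_comp_kerCoact hf) m

/-- The kernel of a homomorphism of Hopf modules. -/
def ker (hf : IsHom P Q f) : HopfModule E (LinearMap.ker f) where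
  toEquivariantModule := EquivariantModule.ker hf.toIsHom
  coact := kerCoact hf
  coassoc m := by
    apply Module.Flat.rTensor_preserves_injective_linearMap (M := H) _
      (rTensor_subtype_injective (LinearMap.ker f))
    rw [← LinearMap.rTensor_comp_apply, rTensor_subtype_comp_kerCoact, ← cofreeCoact_rTensor,
      rTensor_subtype_kerCoact, ← P.coassoc, LinearMap.rTensor_comp_apply,
      rTensor_subtype_kerCoact]
  counit m := (LinearMap.ker f).injective_subtype <| by
    rw [← rid_lTensor_counit_rTensor, rTensor_subtype_kerCoact, P.counit, Submodule.subtype_apply]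
  coact_aut m := by
    have subtype_comp_aut : (LinearMap.ker f).subtype ∘ₗ
        (EquivariantModule.ker hf.toIsHom).aut.toLinearMap =
          P.aut.toLinearMap ∘ₗ (LinearMap.ker f).subtype := rfl
    apply rTensor_subtype_injective (LinearMap.ker f)
    rw [rTensor_subtype_kerCoact, rTensor_map subtype_comp_aut, rTensor_subtype_kerCoact]
    exact P.coact_aut m
  coact_act a m := by
    apply rTensor_subtype_injective (LinearMap.ker f)
    rw [rTensor_subtype_kerCoact, rTensor_tensorAct (ψ := P.act) (fun _ _ ↦ rfl),
      rTensor_subtype_kerCoact]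
    exact P.coact_act a m

end Ker

end HopfModule

/-! ### The equivalence -/

namespace ComoduleExtension

open EquivariantModule

variable {k : Type v} [CommRing k] {B A H : Type u} [Ring B] [Algebra k B]
  [Ring A] [Algebra k A] [Ring H] [Bialgebra k H] {τ : B ≃ₐ[k] B} {β : A ≃ₐ[k] A}
  {α : H ≃ₐc[k] H} {E : ComoduleExtension τ β α}
  {M N : Type u} [AddCommGroup M] [Module k M] [AddCommGroup N] [Module k N]

section Unit

variable (E) in
/-- The unit `M → (A ⊗_B M)^co`, `m ↦ 1 ⊗ m`. -/
def unitMap (S : EquivariantModule τ M) : M →ₗ[k] (E.induce S).coinvariants :=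
  ((E.tmul S).flip 1).codRestrict _ fun m ↦ (E.induce S).mem_coinvariants.mpr <| by
    change (E.tmul S m).rTensor H (E.coact 1) = E.tmul S m 1 ⊗ₜ 1
    simp [Algebra.TensorProduct.one_def]

@[simp]
theorem coe_unitMap (S : EquivariantModule τ M) (m : M) :
    (E.unitMap S m : E.Induced S) = E.tmul S m 1 :=
  rfl

variable {S : EquivariantModule τ M} {T : EquivariantModule τ N}

theorem isHom_unitMap : IsHom S (E.induce S).coinvariantsModule (E.unitMap S) where
  map_act b m := Subtype.ext <| by
    change E.tmul S (S.act b m) 1 = E.tmul S m (E.incl b * 1)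
    simp [tmul_act]
  map_aut m := Subtype.ext <| by
    change E.tmul S (S.aut m) 1 = E.tmul S (S.aut m) (β 1)
    simp

variable (E) in
/-- The unit and counit of the adjunction between equivariant `B`-modules and Hopf modules are
bijective. -/
def IsEquivalence : Prop :=
  (∀ ⦃M : Type u⦄ [AddCommGroup M] [Module k M] (S : EquivariantModule τ M),
    Function.Bijective (E.unitMap S)) ∧
  ∀ ⦃N : Type u⦄ [AddCommGroup N] [Module k N] (P : HopfModule E N),
    Function.Bijective P.counitMap

end Unit

section GaloisDescent

variable (P : HopfModule E N)

theorem can_map_subtype (x : E.Induced P.coinvariantsModule) :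
    E.can P.toEquivariantModule (E.map P.isHom_subtype_coinvariants x) =
      P.coact (P.counitMap x) := by
  have : E.can P.toEquivariantModule ∘ₗ E.map P.isHom_subtype_coinvariants =
      P.coact ∘ₗ P.counitMap := induced_hom_ext fun n a ↦ by
    have coact_coe : P.coact n = (n : N) ⊗ₜ 1 := P.mem_coinvariants.mp n.2
    change (P.orbit n).rTensor H (E.coact a) = P.coact (P.act a n)
    rw [P.coact_act, coact_coe, tensorAct_tmul_one]
    rfl
  exact LinearMap.congr_fun this x

theorem can_tmul_defect (n : N) (a : A) :
    E.can (E.diagonal P.toEquivariantModule) (E.tmul _ (P.defect n) a) =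
      P.coact.rTensor H ((P.orbit n).rTensor H (E.coact a)) -
        cofreeCoact k N H ((P.orbit n).rTensor H (E.coact a)) := by
  have orbit_coact : (E.diagonal P.toEquivariantModule).orbit (P.coact n) =
      P.coact ∘ₗ P.orbit n := LinearMap.ext fun a ↦ (P.coact_act a n).symm
  have orbit_tmul_one : (E.diagonal P.toEquivariantModule).orbit (n ⊗ₜ 1) =
      (P.orbit n).rTensor H ∘ₗ E.coact.toLinearMap :=
    LinearMap.ext fun a ↦ tensorAct_tmul_one P.act (E.coact a) n
  rw [can_tmul, HopfModule.defect_apply, _root_.map_sub, orbit_coact, orbit_tmul_one,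
    LinearMap.rTensor_sub, LinearMap.sub_apply, LinearMap.rTensor_comp_apply,
    LinearMap.rTensor_comp_apply, cofreeCoact_rTensor, ← E.coassoc]

theorem can_map_defect (x : E.Induced (E.restrict P.toEquivariantModule)) :
    E.can (E.diagonal P.toEquivariantModule) (E.map P.isHom_defect x) =
      P.coact.rTensor H (E.can P.toEquivariantModule x) -
        cofreeCoact k N H (E.can P.toEquivariantModule x) := by
  have : E.can (E.diagonal P.toEquivariantModule) ∘ₗ E.map P.isHom_defect =
      (P.coact.rTensor H - cofreeCoact k N H) ∘ₗ E.can P.toEquivariantModule := by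
    refine induced_hom_ext (P := (N ⊗[k] H) ⊗[k] H) fun n a ↦ ?_
    exact can_tmul_defect P n a
  exact LinearMap.congr_fun this x

theorem FaithfullyFlat.counitMap_bijective (hE : E.FaithfullyFlat) (hgal : E.IsGalois) :
    Function.Bijective P.counitMap := by
  have map_subtype_injective :
      Function.Injective (E.map P.isHom_subtype_coinvariants) :=
    (hE.map_injective_iff _).mpr (Submodule.injective_subtype _)
  have map_exact : Function.Exact (E.map P.isHom_subtype_coinvariants)
      (E.map P.isHom_defect) :=
    (hE _ _).mp (LinearMap.exact_subtype_ker_map _)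
  refine ⟨(injective_iff_map_eq_zero _).mpr fun x hx ↦ ?_, fun n ↦ ?_⟩
  · refine (map_eq_zero_iff _ map_subtype_injective).mp <|
      (map_eq_zero_iff _ (hgal.can_bijective P.toEquivariantModule).1).mp ?_
    rw [can_map_subtype, hx, _root_.map_zero]
  · obtain ⟨y, hy⟩ := (hgal.can_bijective P.toEquivariantModule).2 (P.coact n)
    have : E.map P.isHom_defect y = 0 := by
      refine (map_eq_zero_iff _ (hgal.can_bijective (E.diagonal P.toEquivariantModule)).1).mp ?_
      rw [can_map_defect, hy, P.coassoc, sub_self]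
    obtain ⟨x, rfl⟩ := (map_exact y).mp this
    exact ⟨x, P.coact_injective (by rw [← can_map_subtype, hy])⟩

theorem FaithfullyFlat.unitMap_bijective (hE : E.FaithfullyFlat) (hgal : E.IsGalois)
    (S : EquivariantModule τ M) : Function.Bijective (E.unitMap S) := by
  have counitMap_map_unitMap : (E.induce S).counitMap ∘ E.map isHom_unitMap = id := by
    have : (E.induce S).counitMap ∘ₗ E.map isHom_unitMap = LinearMap.id :=
      induced_hom_ext fun m a ↦ by
        change E.tmul S m (a * 1) = E.tmul S m a
        rw [mul_one]
    exact congrArg DFunLike.coe this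
  refine (hE.map_bijective_iff isHom_unitMap).mp ?_
  refine (Function.Bijective.of_comp_iff' (hE.counitMap_bijective (E.induce S) hgal) _).mp ?_
  rw [counitMap_map_unitMap]
  exact Function.bijective_id

end GaloisDescent

section Equivalence

variable {L : Type u} [AddCommGroup L] [Module k L] {S : EquivariantModule τ M}
  {T : EquivariantModule τ N} {U : EquivariantModule τ L}

theorem IsEquivalence.can_bijective (hE : E.IsEquivalence) (V : EquivariantModule β N) :
    Function.Bijective (E.can V) := by
  let ι : N →ₗ[k] (E.cofree V).coinvariants :=
    ((TensorProduct.mk k N H).flip 1).codRestrict _ fun n ↦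
      (E.cofree V).mem_coinvariants.mpr <| by
        change cofreeCoact k N H (n ⊗ₜ 1) = (n ⊗ₜ 1) ⊗ₜ 1
        simp [cofreeCoact_tmul, Algebra.TensorProduct.one_def]
  have hι : IsHom (E.restrict V) (E.cofree V).coinvariantsModule ι := by
    refine ⟨fun b n ↦ Subtype.ext ?_, fun n ↦ Subtype.ext ?_⟩
    · change V.act (E.incl b) n ⊗ₜ 1 = tensorAct V.act (E.coact (E.incl b)) (n ⊗ₜ 1)
      simp [E.coact_incl]
    · change V.aut n ⊗ₜ 1 = TensorProduct.map V.aut.toLinearMap (α : H →ₗ[k] H) (n ⊗ₜ 1)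
      simp
  have hbij : Function.Bijective ι := by
    refine ⟨fun n n' h ↦ ?_, fun ⟨x, hx⟩ ↦ ?_⟩
    · have := congrArg (fun x ↦ TensorProduct.rid k N (Coalgebra.counit.lTensor N x))
        (congrArg Subtype.val h)
      simpa [ι] using this
    · refine ⟨TensorProduct.rid k N (Coalgebra.counit.lTensor N x), Subtype.ext ?_⟩
      have := congrArg
        (((TensorProduct.rid k N).toLinearMap ∘ₗ Coalgebra.counit.lTensor N).rTensor H)
        ((E.cofree V).mem_coinvariants.mp hx)
      exact this.symm.trans (rTensor_counit_cofreeCoact x)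
  have counitMap_map : (E.cofree V).counitMap ∘ₗ E.map hι = E.can V :=
    induced_hom_ext fun n a ↦ tensorAct_tmul_one V.act (E.coact a) n
  rw [← counitMap_map]
  exact (hE.2 (E.cofree V)).comp (E.map_bijective hι hbij)

theorem isHom_map {f : M →ₗ[k] N} (hf : IsHom S T f) :
    HopfModule.IsHom (E.induce S) (E.induce T) (E.map hf) where
  map_act a x := by
    have : E.map hf ∘ₗ E.inducedAct S a = E.inducedAct T a ∘ₗ E.map hf :=
      induced_hom_ext fun _ _ ↦ rfl
    exact LinearMap.congr_fun this x
  map_aut x := by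
    have : E.map hf ∘ₗ (E.inducedAut S).toLinearMap =
        (E.inducedAut T).toLinearMap ∘ₗ E.map hf :=
      induced_hom_ext fun m a ↦ by simp [hf.map_aut]
    exact LinearMap.congr_fun this x
  map_coact x := by
    have : E.inducedCoact T ∘ₗ E.map hf = (E.map hf).rTensor H ∘ₗ E.inducedCoact S :=
      induced_hom_ext fun m a ↦ by
        have map_comp_tmul : E.map hf ∘ₗ E.tmul S m = E.tmul T (f m) := rfl
        simp [← LinearMap.rTensor_comp_apply, map_comp_tmul]
    exact LinearMap.congr_fun this x

theorem map_unitMap {f : M →ₗ[k] N} (hf : IsHom S T f) (m : M) :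
    E.map hf (E.unitMap S m) = E.unitMap T (f m) :=
  rfl

theorem IsEquivalence.unitMap_eq_zero (hE : E.IsEquivalence) {m : M} :
    (E.unitMap S m : E.Induced S) = 0 ↔ m = 0 := by
  rw [ZeroMemClass.coe_eq_zero, map_eq_zero_iff _ (hE.1 S).1]

theorem IsEquivalence.map_injective [Module.Flat k H] (hE : E.IsEquivalence) {f : M →ₗ[k] N}
    (hf : IsHom S T f) (hinj : Function.Injective f) : Function.Injective (E.map hf) := by
  let K := HopfModule.ker (isHom_map (E := E) hf)
  have coinvariants_eq_bot : K.coinvariants = ⊥ := by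
    refine (Submodule.eq_bot_iff _).mpr fun x hx ↦ Subtype.ext ?_
    have coact_x : (E.induce S).coact x = (x : E.Induced S) ⊗ₜ 1 := by
      rw [← HopfModule.rTensor_subtype_kerCoact (isHom_map hf)]
      exact congrArg _ (K.mem_coinvariants.mp hx)
    obtain ⟨m, hm⟩ := (hE.1 S).2 ⟨x, (E.induce S).mem_coinvariants.mpr coact_x⟩
    have hm : (E.unitMap S m : E.Induced S) = x := congrArg Subtype.val hm
    have : f m = 0 := by
      rw [← hE.unitMap_eq_zero (S := T), ← map_unitMap hf, hm, x.2]
    rw [← hm, (map_eq_zero_iff f hinj).mp this, _root_.map_zero]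
    rfl
  have : Subsingleton K.coinvariants := by
    rw [coinvariants_eq_bot]
    infer_instance
  have counitMap_eq_zero : K.counitMap = 0 := induced_hom_ext fun n a ↦ by
    rw [Subsingleton.elim n 0]
    simp
  refine (injective_iff_map_eq_zero _).mpr fun x hx ↦ ?_
  obtain ⟨y, hy⟩ := (hE.2 K).2 ⟨x, hx⟩
  rw [counitMap_eq_zero] at hy
  exact (congrArg Subtype.val hy).symm

theorem IsEquivalence.exact_map [Module.Flat k H] (hE : E.IsEquivalence) {f : M →ₗ[k] N}
    {g : N →ₗ[k] L} (hf : IsHom S T f) (hg : IsHom T U g) (h : Function.Exact f g) :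
    Function.Exact (E.map hf) (E.map hg) := by
  have range_eq_ker : LinearMap.range f = LinearMap.ker g := (LinearMap.exact_iff.mp h).symm
  have hbar := hf.liftQ_range hg range_eq_ker.le
  have bar_injective : Function.Injective ((LinearMap.range f).liftQ g range_eq_ker.le) :=
    LinearMap.ker_eq_bot.mp (Submodule.ker_liftQ_eq_bot _ _ _ range_eq_ker.ge)
  have map_factor : E.map hg = E.map hbar ∘ₗ E.map (isHom_mkQ_range hf) :=
    induced_hom_ext fun _ _ ↦ rfl
  rw [map_factor]
  exact (E.exact_map_mkQ_range hf).comp_injective _ (hE.map_injective hbar bar_injective)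
    (_root_.map_zero _)

theorem IsEquivalence.exact_of_exact_map (hE : E.IsEquivalence) {f : M →ₗ[k] N}
    {g : N →ₗ[k] L} (hf : IsHom S T f) (hg : IsHom T U g)
    (h : Function.Exact (E.map hf) (E.map hg)) : Function.Exact f g := by
  refine fun n ↦ ⟨fun hn ↦ ?_, ?_⟩
  · have : E.map hg (E.unitMap T n) = 0 := by
      rw [map_unitMap, hn, _root_.map_zero, ZeroMemClass.coe_zero]
    obtain ⟨y, hy⟩ := (h _).mp this
    have mkQ_eq_zero : (LinearMap.range f).mkQ n = 0 := by
      rw [← hE.unitMap_eq_zero (S := coker hf), ← map_unitMap (isHom_mkQ_range hf), ← hy]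
      exact (E.exact_map_mkQ_range hf).apply_apply_eq_zero y
    simpa using mkQ_eq_zero
  · rintro ⟨m, rfl⟩
    rw [← hE.unitMap_eq_zero (S := U), ← map_unitMap hg, ← map_unitMap hf]
    exact h.apply_apply_eq_zero _

theorem faithfullyFlat_and_isGalois_iff_isEquivalence [Module.Flat k H] :
    E.FaithfullyFlat ∧ E.IsGalois ↔ E.IsEquivalence := by
  constructor
  · rintro ⟨hflat, hgal⟩
    exact ⟨fun _ _ _ S ↦ hflat.unitMap_bijective hgal S,
      fun _ _ _ P ↦ hflat.counitMap_bijective P hgal⟩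
  · intro hE
    exact ⟨fun _ _ _ _ _ _ _ _ _ _ _ _ _ _ hf hg ↦
      ⟨hE.exact_map hf hg, hE.exact_of_exact_map hf hg⟩, hE.can_bijective (regular β)⟩

end Equivalence

end ComoduleExtension

/-! ### Untwisting Hom-structures -/

section Untwist

variable {k : Type v} [CommRing k] {N H : Type u} [AddCommGroup N] [Module k N]
  [AddCommGroup H] [Module k H] {μ : N ≃ₗ[k] N} {α : H ≃ₗ[k] H}
  {ρ : N →ₗ[k] N ⊗[k] H} {Δ : H →ₗ[k] H ⊗[k] H} {ε : H →ₗ[k] k}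

/-- The coaction `n ↦ μ n₀ ⊗ α n₁` attached to a Hom-coaction `ρ : n ↦ n₀ ⊗ n₁`. It satisfies the
ordinary comodule axioms as soon as `ρ` satisfies the Hom-comodule axioms. -/
def untwistCoact (μ : N ≃ₗ[k] N) (α : H ≃ₗ[k] H) (ρ : N →ₗ[k] N ⊗[k] H) : N →ₗ[k] N ⊗[k] H :=
  (TensorProduct.congr μ α).toLinearMap ∘ₗ ρ

theorem untwistCoact_comp_aut_iff :
    untwistCoact μ α ρ ∘ₗ μ.toLinearMap =
        TensorProduct.map μ.toLinearMap α.toLinearMap ∘ₗ untwistCoact μ α ρ ↔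
      ρ ∘ₗ μ.toLinearMap = TensorProduct.map μ.toLinearMap α.toLinearMap ∘ₗ ρ :=
  LinearEquiv.comp_toLinearMap_eq_iff (e₁₂ := TensorProduct.congr μ α)
    (ρ ∘ₗ μ.toLinearMap) (TensorProduct.map μ.toLinearMap α.toLinearMap ∘ₗ ρ)

theorem untwistCoact_counit_iff (hε : ε ∘ₗ α.toLinearMap = ε) :
    (TensorProduct.rid k N).toLinearMap ∘ₗ ε.lTensor N ∘ₗ untwistCoact μ α ρ = LinearMap.id ↔
      (TensorProduct.rid k N).toLinearMap ∘ₗ TensorProduct.map LinearMap.id ε ∘ₗ ρ =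
        μ.symm.toLinearMap := by
  have counit_congr : (TensorProduct.rid k N).toLinearMap ∘ₗ ε.lTensor N ∘ₗ
      (TensorProduct.congr μ α).toLinearMap =
        μ.toLinearMap ∘ₗ (TensorProduct.rid k N).toLinearMap ∘ₗ ε.lTensor N :=
    TensorProduct.ext' fun n h ↦ by
      simpa using congrArg (· • μ n) (LinearMap.congr_fun hε h)
  refine (Iff.of_eq (congrArg (· ∘ₗ ρ = LinearMap.id) counit_congr)).trans ?_
  rw [← LinearMap.comp_id μ.symm.toLinearMap, LinearEquiv.eq_toLinearMap_symm_comp]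
  rfl

theorem untwistCoact_counit_left_iff (hε : ε ∘ₗ α.toLinearMap = ε) :
    (TensorProduct.lid k H).toLinearMap ∘ₗ ε.rTensor H ∘ₗ untwistCoact α α Δ = LinearMap.id ↔
      (TensorProduct.lid k H).toLinearMap ∘ₗ TensorProduct.map ε LinearMap.id ∘ₗ Δ =
        α.symm.toLinearMap := by
  have counit_congr : (TensorProduct.lid k H).toLinearMap ∘ₗ ε.rTensor H ∘ₗ
      (TensorProduct.congr α α).toLinearMap =
        α.toLinearMap ∘ₗ (TensorProduct.lid k H).toLinearMap ∘ₗ ε.rTensor H :=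
    TensorProduct.ext' fun h h' ↦ by
      simpa using congrArg (· • α h') (LinearMap.congr_fun hε h)
  refine (Iff.of_eq (congrArg (· ∘ₗ Δ = LinearMap.id) counit_congr)).trans ?_
  rw [← LinearMap.comp_id α.symm.toLinearMap, LinearEquiv.eq_toLinearMap_symm_comp]
  rfl

theorem untwistCoact_coassoc_iff
    (hρ : ρ ∘ₗ μ.toLinearMap = TensorProduct.map μ.toLinearMap α.toLinearMap ∘ₗ ρ)
    (hΔ : Δ ∘ₗ α.toLinearMap = TensorProduct.map α.toLinearMap α.toLinearMap ∘ₗ Δ) :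
    (TensorProduct.assoc k N H H).toLinearMap ∘ₗ (untwistCoact μ α ρ).rTensor H ∘ₗ
        untwistCoact μ α ρ = (untwistCoact α α Δ).lTensor N ∘ₗ untwistCoact μ α ρ ↔
      TensorProduct.map μ.symm.toLinearMap Δ ∘ₗ ρ =
        (TensorProduct.assoc k N H H).toLinearMap ∘ₗ
          TensorProduct.map ρ α.symm.toLinearMap ∘ₗ ρ := by
  let Φ := TensorProduct.congr (μ.trans μ) (TensorProduct.congr (α.trans α) (α.trans α))
  have assoc_rTensor : (TensorProduct.assoc k N H H).toLinearMap ∘ₗ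
      (untwistCoact μ α ρ).rTensor H ∘ₗ (TensorProduct.congr μ α).toLinearMap =
        Φ.toLinearMap ∘ₗ (TensorProduct.assoc k N H H).toLinearMap ∘ₗ
          TensorProduct.map ρ α.symm.toLinearMap := TensorProduct.ext' fun n h ↦ by
    have hρn := LinearMap.congr_fun hρ n
    simp only [LinearMap.comp_apply, LinearEquiv.coe_coe] at hρn
    simp only [untwistCoact, LinearMap.comp_apply, LinearEquiv.coe_coe,
      TensorProduct.congr_tmul, LinearMap.rTensor_tmul, TensorProduct.map_tmul, hρn]
    induction ρ n with
    | zero => simp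
    | add y y' hy hy' => simp only [map_add, add_tmul, hy, hy']
    | tmul n' h' => simp [Φ]
  have lTensor_untwistCoact : (untwistCoact α α Δ).lTensor N ∘ₗ
      (TensorProduct.congr μ α).toLinearMap =
        Φ.toLinearMap ∘ₗ TensorProduct.map μ.symm.toLinearMap Δ := TensorProduct.ext' fun n h ↦ by
    have hΔh := LinearMap.congr_fun hΔ h
    simp only [LinearMap.comp_apply, LinearEquiv.coe_coe] at hΔh
    simp only [untwistCoact, LinearMap.comp_apply, LinearEquiv.coe_coe,
      TensorProduct.congr_tmul, LinearMap.lTensor_tmul, TensorProduct.map_tmul, hΔh]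
    induction Δ h with
    | zero => simp
    | add y y' hy hy' => simp only [map_add, tmul_add, hy, hy']
    | tmul h' h'' => simp [Φ]
  refine (Iff.of_eq (congrArg₂ (· ∘ₗ ρ = · ∘ₗ ρ) assoc_rTensor lTensor_untwistCoact)).trans ?_
  exact (LinearEquiv.comp_toLinearMap_eq_iff (e₁₂ := Φ)
    ((TensorProduct.assoc k N H H).toLinearMap ∘ₗ TensorProduct.map ρ α.symm.toLinearMap ∘ₗ ρ)
    (TensorProduct.map μ.symm.toLinearMap Δ ∘ₗ ρ)).trans eq_comm

theorem untwistCoact_eq_tmul_iff {h : H} (hh : α h = h) (n : N) :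
    untwistCoact μ α ρ n = n ⊗ₜ h ↔ ρ n = μ.symm n ⊗ₜ h := by
  have congr_tmul : n ⊗ₜ[k] h = TensorProduct.congr μ α (μ.symm n ⊗ₜ h) := by simp [hh]
  rw [congr_tmul]
  exact (TensorProduct.congr μ α).injective.eq_iff

end Untwist

theorem untwistCoact_act_iff {k : Type v} [CommRing k] {R N H : Type u} [Ring R]
    [Algebra k R] [AddCommGroup N] [Module k N] [Ring H] [Algebra k H] {σ : R ≃ₐ[k] R}
    (S : EquivariantModule σ N) {α : H ≃ₗ[k] H}
    {act : N →ₗ[k] R →ₗ[k] N} {mul : H →ₗ[k] H →ₗ[k] H}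
    (hact : ∀ n r, act n r = S.aut (S.act r n))
    (hmul : ∀ h h', mul (α.symm h) (α.symm h') = h' * h)
    {ρN : N →ₗ[k] N ⊗[k] H} {ρR : R →ₗ[k] R ⊗[k] H}
    (hρN : ρN ∘ₗ S.aut.toLinearMap = TensorProduct.map S.aut.toLinearMap α.toLinearMap ∘ₗ ρN) :
    ρN ∘ₗ TensorProduct.lift act =
        TensorProduct.map (TensorProduct.lift act) (TensorProduct.lift mul) ∘ₗ
          (TensorProduct.tensorTensorTensorComm k N H R H).toLinearMap ∘ₗ
            TensorProduct.map ρN ρR ↔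
      ∀ r n, untwistCoact S.aut α ρN (S.act r n) =
        tensorAct S.act (untwistCoact σ.toLinearEquiv α ρR r) (untwistCoact S.aut α ρN n) := by
  have coact_act (n : N) (r : R) : ρN (act n r) = untwistCoact S.aut α ρN (S.act r n) :=
    (congrArg ρN (hact n r)).trans (LinearMap.congr_fun hρN _)
  have tensorTensorTensorComm_eq_tensorAct (x : N ⊗[k] H) (w : R ⊗[k] H) :
      TensorProduct.map (TensorProduct.lift act) (TensorProduct.lift mul)
          (TensorProduct.tensorTensorTensorComm k N H R H (x ⊗ₜ w)) =
        tensorAct S.act (TensorProduct.congr σ.toLinearEquiv α w)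
          (TensorProduct.congr S.aut α x) := by
    induction x with
    | zero => simp
    | add x x' hx hx' => simp only [map_add, add_tmul, hx, hx']
    | tmul n h =>
      induction w with
      | zero => simp
      | add w w' hw hw' => simp only [map_add, tmul_add, LinearMap.add_apply, hw, hw']
      | tmul r h' => simp [hact, S.aut_act, ← hmul]
  refine Iff.trans ⟨fun h r n ↦ LinearMap.congr_fun h (n ⊗ₜ r),
    fun h ↦ TensorProduct.ext' fun n r ↦ h r n⟩ ?_
  refine forall₂_congr fun r n ↦ ?_
  simp only [LinearMap.comp_apply, TensorProduct.lift.tmul, TensorProduct.map_tmul, coact_act,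
    LinearEquiv.coe_coe, tensorTensorTensorComm_eq_tensorAct]
  rfl

/-- The multiplicative part of a monoidal Hom-bialgebra or of a Hom-comodule algebra. -/
structure MonoidalHomAlgebra (k : Type v) [CommRing k] (V : Type u) [AddCommGroup V]
    [Module k V] where
  mul : V →ₗ[k] V →ₗ[k] V
  one : V
  aut : V ≃ₗ[k] V
  hom_assoc : ∀ a b c, mul (aut a) (mul b c) = mul (mul a b) (aut c)
  mulOne : ∀ a, mul a one = aut a
  oneMul : ∀ a, mul one a = aut a
  aut_mul : ∀ a b, aut (mul a b) = mul (aut a) (aut b)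
  aut_one : aut one = one

namespace MonoidalHomAlgebra

variable {k : Type v} [CommRing k] {V : Type u} [AddCommGroup V] [Module k V]
  (X : MonoidalHomAlgebra k V)

theorem aut_symm_mul (a b : V) :
    X.aut.symm (X.mul a b) = X.mul (X.aut.symm a) (X.aut.symm b) := by
  simp [LinearEquiv.symm_apply_eq, X.aut_mul]

/-- The ordinary ring underlying a monoidal Hom-algebra, with product `aut⁻¹ (b a)`. The opposite
order is taken so that right Hom-modules become left modules. -/
abbrev untwistRing : Ring V where
  __ := ‹AddCommGroup V›
  mul a b := X.aut.symm (X.mul b a)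
  one := X.one
  mul_assoc a b c := by
    change X.aut.symm (X.mul c (X.aut.symm (X.mul b a))) =
      X.aut.symm (X.mul (X.aut.symm (X.mul c b)) a)
    simpa [X.aut_symm_mul] using
      congrArg X.aut.symm (X.hom_assoc (X.aut.symm c) (X.aut.symm b) (X.aut.symm a))
  one_mul a := (congrArg X.aut.symm (X.mulOne a)).trans (X.aut.symm_apply_apply a)
  mul_one a := (congrArg X.aut.symm (X.oneMul a)).trans (X.aut.symm_apply_apply a)
  zero_mul a := by
    change X.aut.symm (X.mul a 0) = 0
    simp
  mul_zero a := by
    change X.aut.symm (X.mul 0 a) = 0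
    simp
  left_distrib a b c := by
    change X.aut.symm (X.mul (b + c) a) = X.aut.symm (X.mul b a) + X.aut.symm (X.mul c a)
    simp
  right_distrib a b c := by
    change X.aut.symm (X.mul c (a + b)) = X.aut.symm (X.mul c a) + X.aut.symm (X.mul c b)
    simp

/-- The `k`-algebra structure on `MonoidalHomAlgebra.untwistRing`. -/
abbrev untwistAlgebra : letI := X.untwistRing; Algebra k V :=
  letI := X.untwistRing
  Algebra.ofModule
    (fun c a b ↦ by
      change X.aut.symm (X.mul b (c • a)) = c • X.aut.symm (X.mul b a)
      simp)
    (fun c a b ↦ by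
      change X.aut.symm (X.mul (c • b) a) = c • X.aut.symm (X.mul b a)
      simp)

theorem mul_eq (a b : V) : letI := X.untwistRing; X.mul a b = X.aut (b * a) :=
  (X.aut.apply_symm_apply _).symm

/-- The structure automorphism as an automorphism of the underlying ordinary algebra. -/
def untwistAut : letI := X.untwistRing; letI := X.untwistAlgebra; V ≃ₐ[k] V :=
  letI := X.untwistRing
  letI := X.untwistAlgebra
  AlgEquiv.ofLinearEquiv X.aut X.aut_one fun a b ↦ by
    change X.aut (X.aut.symm (X.mul b a)) = X.aut.symm (X.mul (X.aut b) (X.aut a))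
    rw [← X.aut_mul, LinearEquiv.apply_symm_apply, LinearEquiv.symm_apply_apply]

end MonoidalHomAlgebra

namespace MonoidalHomBialgebra

variable {k : Type} [Field k] {H : Type} [AddCommGroup H] [Module k H]
  (Hb : MonoidalHomBialgebra k H)

/-- The multiplicative part of a monoidal Hom-bialgebra. -/
def toMonoidalHomAlgebra : MonoidalHomAlgebra k H where
  mul := Hb.mul
  one := Hb.one
  aut := Hb.aut
  hom_assoc := Hb.hom_assoc
  mulOne := Hb.mulOne
  oneMul := Hb.oneMul
  aut_mul := Hb.aut_mul
  aut_one := Hb.aut_one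

theorem counit_aut_symm (h : H) : Hb.counit (Hb.aut.symm h) = Hb.counit h := by
  simpa using (LinearMap.congr_fun Hb.counit_aut (Hb.aut.symm h)).symm

/-- The ordinary bialgebra underlying a monoidal Hom-bialgebra. -/
abbrev untwistBialgebra : letI := Hb.toMonoidalHomAlgebra.untwistRing; Bialgebra k H :=
  letI := Hb.toMonoidalHomAlgebra.untwistRing
  letI := Hb.toMonoidalHomAlgebra.untwistAlgebra
  letI : Coalgebra k H :=
    { comul := untwistCoact Hb.aut Hb.aut Hb.comul
      counit := Hb.counit
      coassoc := (untwistCoact_coassoc_iff Hb.comul_aut Hb.comul_aut).2 Hb.coassoc.symm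
      rTensor_counit_comp_comul := LinearMap.cancel_left (TensorProduct.lid k H).injective |>.1 <|
        ((untwistCoact_counit_left_iff Hb.counit_aut).2 Hb.counit_left).trans (by ext; simp)
      lTensor_counit_comp_comul := LinearMap.cancel_left (TensorProduct.rid k H).injective |>.1 <|
        ((untwistCoact_counit_iff Hb.counit_aut).2 Hb.counit_right).trans (by ext; simp) }
  Bialgebra.mk' k H Hb.counit_one
    (fun {a b} ↦ by
      change Hb.counit (Hb.aut.symm (Hb.mul b a)) = Hb.counit a * Hb.counit b
      rw [Hb.counit_aut_symm, Hb.counit_mul, mul_comm])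
    (congrArg (TensorProduct.congr Hb.aut Hb.aut) Hb.comul_one |>.trans <| by
      simp only [TensorProduct.congr_tmul, Hb.aut_one]
      rfl)
    (fun {a b} ↦ by
      refine Eq.trans ((untwistCoact_act_iff
        (EquivariantModule.regular Hb.toMonoidalHomAlgebra.untwistAut) (α := Hb.aut)
        (act := Hb.mul) (mul := Hb.mul) ?_ ?_ Hb.comul_aut).1 Hb.comul_mul a b) ?_
      · exact fun n r ↦ Hb.toMonoidalHomAlgebra.mul_eq n r
      · exact fun h h' ↦ (Hb.toMonoidalHomAlgebra.aut_symm_mul h h').symm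
      · exact tensorAct_lmul _ _)

/-- The structure automorphism as an automorphism of the underlying ordinary bialgebra. -/
def untwistAut : letI := Hb.toMonoidalHomAlgebra.untwistRing; letI := Hb.untwistBialgebra;
    H ≃ₐc[k] H :=
  letI := Hb.toMonoidalHomAlgebra.untwistRing
  letI := Hb.untwistBialgebra
  BialgEquiv.ofAlgEquiv Hb.toMonoidalHomAlgebra.untwistAut
    (AlgHom.ext fun h ↦ LinearMap.congr_fun Hb.counit_aut h)
    (AlgHom.ext fun h ↦
      (LinearMap.congr_fun (untwistCoact_comp_aut_iff.2 Hb.comul_aut) h).symm)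

end MonoidalHomBialgebra

section Extension

variable {k : Type v} [CommRing k] {A H : Type u} [Ring A] [Algebra k A] [Ring H] [Bialgebra k H]
  {β : A ≃ₐ[k] A} {α : H ≃ₐc[k] H} {coact : A →ₐ[k] A ⊗[k] H}

theorem ComoduleExtension.map_coinvariants_eq (coact_aut : ∀ a, coact (β a) =
      TensorProduct.map β.toLinearMap (α : H →ₗ[k] H) (coact a)) :
    (AlgHom.equalizer coact Algebra.TensorProduct.includeLeft).map (β : A →ₐ[k] A) =
      AlgHom.equalizer coact Algebra.TensorProduct.includeLeft := by
  have apply_mem_iff (a : A) : coact (β a) = β a ⊗ₜ 1 ↔ coact a = a ⊗ₜ 1 := by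
    have map_tmul_one : β a ⊗ₜ[k] (1 : H) =
        TensorProduct.map β.toLinearMap (α : H →ₗ[k] H) (a ⊗ₜ 1) := by simp
    rw [coact_aut, map_tmul_one]
    exact (TensorProduct.congr β.toLinearEquiv (α : H ≃ₗ[k] H)).injective.eq_iff
  ext a
  constructor
  · rintro ⟨a, ha, rfl⟩
    exact (apply_mem_iff a).2 ha
  · exact fun ha ↦ ⟨β.symm a, (apply_mem_iff _).1 (by simpa using ha), β.apply_symm_apply a⟩

/-- The extension of a comodule algebra over its subalgebra of coinvariants. -/
def ComoduleExtension.ofCoact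
    (coassoc : ∀ a, coact.toLinearMap.rTensor H (coact a) = cofreeCoact k A H (coact a))
    (counit : ∀ a, TensorProduct.rid k A (Coalgebra.counit.lTensor A (coact a)) = a)
    (coact_aut : ∀ a, coact (β a) =
      TensorProduct.map β.toLinearMap (α : H →ₗ[k] H) (coact a)) :
    ComoduleExtension ((β.subalgebraMap _).trans
      (Subalgebra.equivOfEq _ _ (ComoduleExtension.map_coinvariants_eq coact_aut))) β α where
  incl := (AlgHom.equalizer coact Algebra.TensorProduct.includeLeft).val
  coact := coact
  coassoc := coassoc
  counit := counit
  aut_incl _ := rfl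
  coact_incl b := b.2
  coact_aut := coact_aut

/-- The module obtained from a twisted right action, `r` acting by `m ↦ aut⁻¹ (m r)`. -/
def EquivariantModule.ofTwistedAct {R M : Type u} [Ring R] [Algebra k R] [AddCommGroup M]
    [Module k M] (σ : R ≃ₐ[k] R) (aut : M ≃ₗ[k] M) (act : M →ₗ[k] R →ₗ[k] M)
    (act_one : ∀ m, act m 1 = aut m)
    (act_act : ∀ m r r', act (act m r) (σ r') = act (aut m) (σ (r' * r)))
    (aut_act : ∀ m r, aut (act m r) = act (aut m) (σ r)) : EquivariantModule σ M where
  act := AlgHom.ofLinearMap (act.compr₂ aut.symm.toLinearMap).flip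
    (by ext m; simp [act_one])
    (fun r' r ↦ by
      ext m
      apply aut.injective
      apply aut.injective
      simp [aut_act, act_act])
  aut := aut
  aut_act r m := by
    apply aut.injective
    simp [aut_act]

end Extension

/-- The Hom-bialgebra `Hb` is the bialgebra `H` with opposite product, twisted by `α`. -/
structure MonoidalHomBialgebra.IsTwistOf {k H : Type} [Field k] [Ring H] [Bialgebra k H]
    (Hb : MonoidalHomBialgebra k H) (α : H ≃ₐc[k] H) : Prop where
  aut_apply : ∀ h, Hb.aut h = α h
  mul_apply : ∀ h h', Hb.mul h h' = α (h' * h)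
  one_eq : Hb.one = 1
  counit_eq : Hb.counit = Coalgebra.counit
  untwistCoact_comul : untwistCoact Hb.aut Hb.aut Hb.comul = Coalgebra.comul

/-- The Hom-comodule algebra `Ac` is the twist by `β` and `α` of the opposite of the comodule
algebra `A`, and `B` is its subalgebra of coinvariants. -/
structure HomComoduleAlgebra.IsTwistOf {k B A H : Type} [Field k] [Ring B] [Algebra k B] [Ring A]
    [Algebra k A] [Ring H] [Bialgebra k H] {Hb : MonoidalHomBialgebra k H} {τ : B ≃ₐ[k] B}
    {β : A ≃ₐ[k] A} {α : H ≃ₐc[k] H} (Ac : HomComoduleAlgebra Hb A)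
    (E : ComoduleExtension τ β α) : Prop where
  aut_eq : Ac.aut = β.toLinearEquiv
  mul_apply : ∀ a a', Ac.mul a a' = β (a' * a)
  one_eq : Ac.one = 1
  coact_eq : E.coact.toLinearMap = untwistCoact Ac.aut Hb.aut Ac.coact
  incl_injective : Function.Injective E.incl
  range_incl : Set.range E.incl = coinvA Ac

/-- The Hom-module `S` over the coinvariants is the twist of the module `T`. -/
structure HomModuleOn.IsTwistOf {k B A H : Type} [Field k] [Ring B] [Algebra k B] [Ring A]
    [Algebra k A] [Ring H] [Bialgebra k H] {Hb : MonoidalHomBialgebra k H} {τ : B ≃ₐ[k] B}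
    {β : A ≃ₐ[k] A} {α : H ≃ₐc[k] H} {Ac : HomComoduleAlgebra Hb A}
    {M : Type} [AddCommGroup M] [Module k M] (S : HomModuleOn Ac (coinvA Ac) M)
    (E : ComoduleExtension τ β α) (T : EquivariantModule τ M) : Prop where
  act_incl : ∀ m b, S.act m (E.incl b) = T.aut (T.act b m)
  aut_eq : S.aut = T.aut

/-- The Hom-Hopf module `P` is the twist of the Hopf module `Q`. -/
structure HomHopfModule.IsTwistOf {k B A H : Type} [Field k] [Ring B] [Algebra k B] [Ring A]
    [Algebra k A] [Ring H] [Bialgebra k H] {Hb : MonoidalHomBialgebra k H} {τ : B ≃ₐ[k] B}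
    {β : A ≃ₐ[k] A} {α : H ≃ₐc[k] H} {E : ComoduleExtension τ β α} {Ac : HomComoduleAlgebra Hb A}
    {N : Type} [AddCommGroup N] [Module k N] (P : HomHopfModule Ac N) (Q : HopfModule E N) :
    Prop where
  act_apply : ∀ n a, P.act n a = Q.aut (Q.act a n)
  aut_eq : P.aut = Q.aut
  coact_eq : Q.coact = untwistCoact P.aut Hb.aut P.coact

namespace MonoidalHomBialgebra

theorem isTwistOf_untwistAut {k H : Type} [Field k] [AddCommGroup H] [Module k H]
    (Hb : MonoidalHomBialgebra k H) :
    letI := Hb.toMonoidalHomAlgebra.untwistRing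
    letI := Hb.untwistBialgebra
    Hb.IsTwistOf Hb.untwistAut :=
  letI := Hb.toMonoidalHomAlgebra.untwistRing
  letI := Hb.untwistBialgebra
  { aut_apply _ := rfl
    mul_apply := Hb.toMonoidalHomAlgebra.mul_eq
    one_eq := rfl
    counit_eq := rfl
    untwistCoact_comul := rfl }

variable {k H : Type} [Field k] [Ring H] [Bialgebra k H] {Hb : MonoidalHomBialgebra k H}
  {α : H ≃ₐc[k] H} {N : Type} [AddCommGroup N] [Module k N]

theorem IsTwistOf.aut_toLinearMap (hH : Hb.IsTwistOf α) :
    Hb.aut.toLinearMap = (α : H →ₗ[k] H) :=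
  LinearMap.ext hH.aut_apply

theorem IsTwistOf.mul_aut_symm (hH : Hb.IsTwistOf α) (h h' : H) :
    Hb.mul (Hb.aut.symm h) (Hb.aut.symm h') = h' * h := by
  rw [hH.mul_apply, map_mul, ← hH.aut_apply, ← hH.aut_apply]
  simp

theorem IsTwistOf.coassoc_iff (hH : Hb.IsTwistOf α) {μ : N ≃ₗ[k] N} {ρ : N →ₗ[k] N ⊗[k] H}
    (hρ : ρ ∘ₗ μ.toLinearMap = TensorProduct.map μ.toLinearMap Hb.aut.toLinearMap ∘ₗ ρ) :
    (∀ n, (untwistCoact μ Hb.aut ρ).rTensor H (untwistCoact μ Hb.aut ρ n) =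
        cofreeCoact k N H (untwistCoact μ Hb.aut ρ n)) ↔
      TensorProduct.map μ.symm.toLinearMap Hb.comul ∘ₗ ρ =
        (TensorProduct.assoc k N H H).toLinearMap ∘ₗ
          TensorProduct.map ρ Hb.aut.symm.toLinearMap ∘ₗ ρ := by
  rw [← untwistCoact_coassoc_iff hρ Hb.comul_aut, hH.untwistCoact_comul, LinearMap.ext_iff]
  exact forall_congr' fun n ↦ (TensorProduct.assoc k N H H).eq_symm_apply

theorem IsTwistOf.counit_iff (hH : Hb.IsTwistOf α) {μ : N ≃ₗ[k] N} {ρ : N →ₗ[k] N ⊗[k] H} :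
    (∀ n, TensorProduct.rid k N (Coalgebra.counit.lTensor N (untwistCoact μ Hb.aut ρ n)) = n) ↔
      (TensorProduct.rid k N).toLinearMap ∘ₗ TensorProduct.map LinearMap.id Hb.counit ∘ₗ ρ =
        μ.symm.toLinearMap := by
  rw [← untwistCoact_counit_iff Hb.counit_aut, hH.counit_eq, LinearMap.ext_iff]
  rfl

theorem IsTwistOf.coact_aut_iff (hH : Hb.IsTwistOf α) {μ : N ≃ₗ[k] N} {ρ : N →ₗ[k] N ⊗[k] H} :
    (∀ n, untwistCoact μ Hb.aut ρ (μ n) =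
        TensorProduct.map μ.toLinearMap (α : H →ₗ[k] H) (untwistCoact μ Hb.aut ρ n)) ↔
      ρ ∘ₗ μ.toLinearMap = TensorProduct.map μ.toLinearMap Hb.aut.toLinearMap ∘ₗ ρ := by
  rw [← untwistCoact_comp_aut_iff, hH.aut_toLinearMap, LinearMap.ext_iff]
  rfl

end MonoidalHomBialgebra

section Twist

variable {k B A H : Type} [Field k] [Ring B] [Algebra k B] [Ring A] [Algebra k A] [Ring H]
  [Bialgebra k H] {Hb : MonoidalHomBialgebra k H} {τ : B ≃ₐ[k] B} {β : A ≃ₐ[k] A}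
  {α : H ≃ₐc[k] H} {E : ComoduleExtension τ β α} {Ac : HomComoduleAlgebra Hb A}
  {M N : Type} [AddCommGroup M] [Module k M] [AddCommGroup N] [Module k N]

theorem HomComoduleAlgebra.exists_isTwistOf (hH : Hb.IsTwistOf α)
    (haut : Ac.aut = β.toLinearEquiv) (hmul : ∀ a a', Ac.mul a a' = β (a' * a))
    (hone : Ac.one = 1) :
    ∃ (B : Type) (_ : Ring B) (_ : Algebra k B) (τ : B ≃ₐ[k] B)
      (E : ComoduleExtension τ β α), Ac.IsTwistOf E := by
  have coact_mul (a a' : A) : untwistCoact Ac.aut Hb.aut Ac.coact (a * a') =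
      untwistCoact Ac.aut Hb.aut Ac.coact a * untwistCoact Ac.aut Hb.aut Ac.coact a' := by
    have coact_aut := Ac.coact_aut
    rw [haut] at coact_aut ⊢
    exact ((untwistCoact_act_iff (EquivariantModule.regular β) hmul hH.mul_aut_symm
      coact_aut).1 Ac.coact_mul a a').trans (tensorAct_lmul _ _)
  have coact_one : untwistCoact Ac.aut Hb.aut Ac.coact 1 = 1 := by
    rw [Algebra.TensorProduct.one_def, untwistCoact_eq_tmul_iff (by simp [hH.aut_apply]),
      ← hone, Ac.coact_one, hH.one_eq, (Ac.aut.symm_apply_eq).2 Ac.aut_one.symm]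
  let coact : A →ₐ[k] A ⊗[k] H := AlgHom.ofLinearMap _ coact_one coact_mul
  have coact_aut (a : A) : coact (β a) =
      TensorProduct.map β.toLinearMap (α : H →ₗ[k] H) (coact a) := by
    have aut_apply : Ac.aut a = β a := LinearEquiv.congr_fun haut a
    have aut_toLinearMap : Ac.aut.toLinearMap = β.toLinearMap := congrArg _ haut
    rw [← aut_apply, ← aut_toLinearMap]
    exact hH.coact_aut_iff.2 Ac.coact_aut a
  refine ⟨_, _, _, _, ComoduleExtension.ofCoact (coact := coact)
    ((hH.coassoc_iff Ac.coact_aut).2 Ac.coassoc) (hH.counit_iff.2 Ac.counit) coact_aut,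
    haut, hmul, hone, rfl, Subtype.val_injective, ?_⟩
  refine Subtype.range_val.trans (Set.ext fun a ↦ ?_)
  refine (untwistCoact_eq_tmul_iff (by simp [hH.aut_apply]) a).trans ?_
  rw [← hH.one_eq]
  rfl

theorem HomComoduleAlgebra.IsTwistOf.aut_apply (hA : Ac.IsTwistOf E) (a : A) : Ac.aut a = β a :=
  LinearEquiv.congr_fun hA.aut_eq a

theorem HomComoduleAlgebra.IsTwistOf.exists_equivariantModule (hA : Ac.IsTwistOf E)
    (S : HomModuleOn Ac (coinvA Ac) M) : ∃ T : EquivariantModule τ M, S.IsTwistOf E T := by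
  have incl_mem (b : B) : E.incl b ∈ coinvA Ac := hA.range_incl ▸ Set.mem_range_self b
  refine ⟨EquivariantModule.ofTwistedAct τ S.aut (S.act.compl₂ E.incl.toLinearMap) ?_ ?_ ?_,
    ?_, rfl⟩
  · intro m
    simp [← S.act_one, hA.one_eq]
  · intro m b b'
    have := S.act_act m _ (incl_mem b) _ (incl_mem b')
    simpa [hA.aut_apply, hA.mul_apply, ← E.aut_incl] using this
  · intro m b
    have := S.aut_act m _ (incl_mem b)
    simpa [hA.aut_apply, ← E.aut_incl] using this
  · intro m b
    simp [EquivariantModule.ofTwistedAct]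

theorem HomComoduleAlgebra.IsTwistOf.exists_homModuleOn (hA : Ac.IsTwistOf E)
    (T : EquivariantModule τ M) : ∃ S : HomModuleOn Ac (coinvA Ac) M, S.IsTwistOf E T := by
  obtain ⟨p, hp⟩ := E.incl.toLinearMap.exists_leftInverse_of_injective
    (LinearMap.ker_eq_bot.2 hA.incl_injective)
  have p_incl (b : B) : p (E.incl b) = b := LinearMap.congr_fun hp b
  have p_one : p 1 = 1 := by rw [← map_one E.incl, p_incl]
  have p_incl_mul (b b' : B) : p (E.incl b * E.incl b') = b * b' := by rw [← map_mul, p_incl]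
  refine ⟨⟨(T.orbit.compr₂ T.aut.toLinearMap).compl₂ p, T.aut, ?_, ?_, ?_⟩, ?_, rfl⟩
  · rw [← hA.range_incl]
    rintro m _ ⟨b, rfl⟩ _ ⟨b', rfl⟩
    rw [hA.aut_apply, hA.mul_apply, map_mul, E.aut_incl, E.aut_incl]
    simp [p_incl, p_incl_mul, T.aut_act]
  · simp [hA.one_eq, p_one]
  · rw [← hA.range_incl]
    rintro m _ ⟨b, rfl⟩
    rw [hA.aut_apply, E.aut_incl]
    simp [p_incl, T.aut_act]
  · intro m b
    simp [p_incl]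

theorem HomComoduleAlgebra.IsTwistOf.exists_hopfModule (hA : Ac.IsTwistOf E) (hH : Hb.IsTwistOf α)
    (P : HomHopfModule Ac N) : ∃ Q : HopfModule E N, P.IsTwistOf Q := by
  let T : EquivariantModule β N := EquivariantModule.ofTwistedAct β P.aut P.act
    (by simp [← P.act_one, hA.one_eq])
    (fun n a a' ↦ by simpa [hA.aut_apply, hA.mul_apply] using P.act_act n a a')
    (fun n a ↦ by simpa [hA.aut_apply] using P.aut_act n a)
  have act_apply (n : N) (a : A) : P.act n a = T.aut (T.act a n) := by
    simp [T, EquivariantModule.ofTwistedAct]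
  refine ⟨{ T with
    coact := untwistCoact P.aut Hb.aut P.coact
    coassoc := (hH.coassoc_iff P.coact_aut).2 P.coassoc
    counit := hH.counit_iff.2 P.counit
    coact_aut := hH.coact_aut_iff.2 P.coact_aut
    coact_act := ?_ }, act_apply, rfl, rfl⟩
  have coact_act := (untwistCoact_act_iff T act_apply hH.mul_aut_symm P.coact_aut).1 P.compat
  rw [← hA.aut_eq, ← hA.coact_eq] at coact_act
  exact coact_act

theorem HomComoduleAlgebra.IsTwistOf.exists_homHopfModule (hA : Ac.IsTwistOf E)
    (hH : Hb.IsTwistOf α) (Q : HopfModule E N) : ∃ P : HomHopfModule Ac N, P.IsTwistOf Q := by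
  let ρ : N →ₗ[k] N ⊗[k] H := (TensorProduct.congr Q.aut Hb.aut).symm.toLinearMap ∘ₗ Q.coact
  have coact_eq : untwistCoact Q.aut Hb.aut ρ = Q.coact :=
    LinearMap.ext fun n ↦ (TensorProduct.congr Q.aut Hb.aut).apply_symm_apply (Q.coact n)
  have coact_aut := hH.coact_aut_iff.1 (coact_eq ▸ Q.coact_aut)
  refine ⟨{
    act := Q.orbit.compr₂ Q.aut.toLinearMap
    aut := Q.aut
    act_act := fun n a a' ↦ by simp [hA.aut_apply, hA.mul_apply, Q.aut_act]
    act_one := by simp [hA.one_eq]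
    aut_act := by simp [hA.aut_apply, Q.aut_act]
    coact := ρ
    coassoc := (hH.coassoc_iff coact_aut).1 (coact_eq ▸ Q.coassoc)
    counit := hH.counit_iff.1 (coact_eq ▸ Q.counit)
    coact_aut := coact_aut
    compat := (untwistCoact_act_iff Q.toEquivariantModule (fun _ _ ↦ rfl) hH.mul_aut_symm
      coact_aut).2 ?_ }, fun _ _ ↦ rfl, rfl, coact_eq.symm⟩
  rw [coact_eq, ← hA.aut_eq, ← hA.coact_eq]
  exact Q.coact_act

end Twist

theorem surjective_comp_mkQ_and_ker_eq_iff {R V W : Type*} [Ring R] [AddCommGroup V] [Module R V]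
    [AddCommGroup W] [Module R W] {U : Submodule R V} {φ : V ⧸ U →ₗ[R] W} :
    Function.Surjective (φ ∘ₗ U.mkQ) ∧ LinearMap.ker (φ ∘ₗ U.mkQ) = U ↔ Function.Bijective φ := by
  have ker_eq_iff : LinearMap.ker (φ ∘ₗ U.mkQ) = U ↔ Function.Injective φ := by
    rw [← LinearMap.ker_eq_bot, LinearMap.ker_comp,
      ← (Submodule.comap_injective_of_surjective U.mkQ_surjective).eq_iff, Submodule.comap_bot,
      Submodule.ker_mkQ]
  rw [ker_eq_iff, LinearMap.coe_comp, U.mkQ_surjective.of_comp_iff, and_comm, Function.Bijective]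

section Transfer

variable {k B A H : Type} [Field k] [Ring B] [Algebra k B] [Ring A] [Algebra k A] [Ring H]
  [Bialgebra k H] {Hb : MonoidalHomBialgebra k H} {τ : B ≃ₐ[k] B} {β : A ≃ₐ[k] A}
  {α : H ≃ₐc[k] H} {E : ComoduleExtension τ β α} {Ac : HomComoduleAlgebra Hb A}
  {M N : Type} [AddCommGroup M] [Module k M] [AddCommGroup N] [Module k N]

theorem ComoduleExtension.span_aut_tmul_eq_inducedRel (E : ComoduleExtension τ β α)
    (T : EquivariantModule τ M) :
    Submodule.span k {x | ∃ b m a,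
      x = T.aut (T.act b m) ⊗ₜ[k] β a - T.aut m ⊗ₜ[k] β (a * E.incl b)} = E.inducedRel T := by
  refine congrArg (Submodule.span k) (Set.ext fun x ↦ ⟨?_, ?_⟩)
  · rintro ⟨b, m, a, rfl⟩
    exact ⟨τ b, T.aut m, β a, by rw [T.aut_act, map_mul, E.aut_incl]⟩
  · rintro ⟨b, m, a, rfl⟩
    refine ⟨τ.symm b, T.aut.symm m, β.symm a, ?_⟩
    simp [T.aut_act, E.aut_incl]

theorem HomComoduleAlgebra.IsTwistOf.relSubR_eq (hA : Ac.IsTwistOf E)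
    {act : M →ₗ[k] A →ₗ[k] M} {μ : M ≃ₗ[k] M} {T : EquivariantModule τ M}
    (hact : ∀ m b, act m (E.incl b) = T.aut (T.act b m)) (hμ : μ = T.aut) :
    relSubR Ac.mul Ac.aut (coinvA Ac) act μ = E.inducedRel T := by
  rw [← E.span_aut_tmul_eq_inducedRel T, hμ, relSubR, ← hA.range_incl]
  refine congrArg (Submodule.span k) (Set.ext fun x ↦ ⟨?_, ?_⟩)
  · rintro ⟨m, a, _, ⟨b, rfl⟩, rfl⟩
    exact ⟨b, m, a, by rw [hact, hA.aut_apply, hA.mul_apply]⟩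
  · rintro ⟨b, m, a, rfl⟩
    exact ⟨m, a, _, ⟨b, rfl⟩, by rw [hact, hA.aut_apply, hA.mul_apply]⟩

theorem HomModuleOn.IsTwistOf.isHom_iff {S : HomModuleOn Ac (coinvA Ac) M}
    {S' : HomModuleOn Ac (coinvA Ac) N} {T : EquivariantModule τ M} {T' : EquivariantModule τ N}
    {f : M →ₗ[k] N} (hA : Ac.IsTwistOf E) (hS : S.IsTwistOf E T) (hS' : S'.IsTwistOf E T') :
    IsHomModuleOnHomR Ac (coinvA Ac) S S' f ↔ EquivariantModule.IsHom T T' f := by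
  have incl_mem (b : B) : E.incl b ∈ coinvA Ac := hA.range_incl ▸ Set.mem_range_self b
  constructor
  · rintro ⟨map_act, map_aut⟩
    rw [hS.aut_eq, hS'.aut_eq] at map_aut
    refine ⟨fun b m ↦ T'.aut.injective ?_, map_aut⟩
    rw [← map_aut, ← hS.act_incl, ← hS'.act_incl, map_act m _ (incl_mem b)]
  · intro hf
    refine ⟨fun m a ha ↦ ?_, by simpa only [hS.aut_eq, hS'.aut_eq] using hf.map_aut⟩
    obtain ⟨b, rfl⟩ : a ∈ Set.range E.incl := hA.range_incl ▸ ha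
    rw [hS.act_incl, hS'.act_incl, hf.map_aut, hf.map_act]

theorem ComoduleExtension.eq_map_iff {T : EquivariantModule τ M} {T' : EquivariantModule τ N}
    {f : M →ₗ[k] N} (hf : EquivariantModule.IsHom T T' f) {φ : E.Induced T →ₗ[k] E.Induced T'} :
    φ ∘ₗ (E.inducedRel T).mkQ =
        (E.inducedRel T').mkQ ∘ₗ TensorProduct.map f LinearMap.id ↔ φ = E.map hf := by
  have map_comp_mkQ : E.map hf ∘ₗ (E.inducedRel T).mkQ =
      (E.inducedRel T').mkQ ∘ₗ TensorProduct.map f LinearMap.id := TensorProduct.ext' fun _ _ ↦ rfl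
  rw [← map_comp_mkQ, LinearMap.cancel_right (Submodule.mkQ_surjective _)]

theorem HomModuleOn.IsTwistOf.relSubR_eq {S : HomModuleOn Ac (coinvA Ac) M}
    {T : EquivariantModule τ M} (hA : Ac.IsTwistOf E) (hS : S.IsTwistOf E T) :
    relSubR Ac.mul Ac.aut (coinvA Ac) S.act S.aut = E.inducedRel T :=
  hA.relSubR_eq hS.act_incl hS.aut_eq

theorem HomComoduleAlgebra.IsTwistOf.faithfullyFlatLeftOf_iff (hA : Ac.IsTwistOf E) :
    FaithfullyFlatLeftOf Ac (coinvA Ac) ↔ E.FaithfullyFlat := by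
  constructor
  · intro h M₁ M₂ M₃ _ _ _ _ _ _ T₁ T₂ T₃ f g hf hg
    obtain ⟨S₁, h₁⟩ := hA.exists_homModuleOn T₁
    obtain ⟨S₂, h₂⟩ := hA.exists_homModuleOn T₂
    obtain ⟨S₃, h₃⟩ := hA.exists_homModuleOn T₃
    have exact_iff := h M₁ M₂ M₃ S₁ S₂ S₃ f g ((h₁.isHom_iff hA h₂).2 hf)
      ((h₂.isHom_iff hA h₃).2 hg)
    rw [h₁.relSubR_eq hA, h₂.relSubR_eq hA, h₃.relSubR_eq hA] at exact_iff
    simpa only [LinearMap.exact_iff, eq_comm] using exact_iff _ _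
      ((ComoduleExtension.eq_map_iff hf).2 rfl) ((ComoduleExtension.eq_map_iff hg).2 rfl)
  · intro h M₁ M₂ M₃ _ _ _ _ _ _ S₁ S₂ S₃ f g hf hg
    obtain ⟨T₁, h₁⟩ := hA.exists_equivariantModule S₁
    obtain ⟨T₂, h₂⟩ := hA.exists_equivariantModule S₂
    obtain ⟨T₃, h₃⟩ := hA.exists_equivariantModule S₃
    rw [h₁.isHom_iff hA h₂] at hf
    rw [h₂.isHom_iff hA h₃] at hg
    rw [h₁.relSubR_eq hA, h₂.relSubR_eq hA, h₃.relSubR_eq hA]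
    intro fbar gbar hfbar hgbar
    obtain rfl := (ComoduleExtension.eq_map_iff hf).1 hfbar
    obtain rfl := (ComoduleExtension.eq_map_iff hg).1 hgbar
    simpa only [LinearMap.exact_iff, eq_comm] using h hf hg

theorem HomComoduleAlgebra.IsTwistOf.canPreLin_eq (hA : Ac.IsTwistOf E) :
    canPreLin Ac = E.can (EquivariantModule.regular β) ∘ₗ (E.inducedRel _).mkQ := by
  have map_mul (a' : A) (x : A ⊗[k] H) :
      TensorProduct.map (TensorProduct.lift Ac.mul) Hb.aut.toLinearMap
          ((TensorProduct.assoc k A A H).symm (Ac.aut.symm a' ⊗ₜ x)) =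
        ((EquivariantModule.regular β).orbit a').rTensor H
          (TensorProduct.congr Ac.aut Hb.aut x) := by
    induction x with
    | zero => simp
    | add x y hx hy => simp_all [TensorProduct.tmul_add]
    | tmul b h => simp [hA.mul_apply, hA.aut_eq]
  refine TensorProduct.ext' fun a' a ↦ ?_
  change _ = ((EquivariantModule.regular β).orbit a').rTensor H (E.coact.toLinearMap a)
  rw [hA.coact_eq]
  exact map_mul a' (Ac.coact a)

theorem HomComoduleAlgebra.IsTwistOf.canMap_bijective_iff (hA : Ac.IsTwistOf E) :
    (∀ canMap : ((A ⊗[k] A) ⧸ relSubR Ac.mul Ac.aut (coinvA Ac) Ac.mul Ac.aut) →ₗ[k] A ⊗[k] H,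
      canMap ∘ₗ (relSubR Ac.mul Ac.aut (coinvA Ac) Ac.mul Ac.aut).mkQ = canPreLin Ac →
        Function.Bijective canMap) ↔ E.IsGalois := by
  have relSubR_eq : relSubR Ac.mul Ac.aut (coinvA Ac) Ac.mul Ac.aut =
      E.inducedRel (E.restrict (EquivariantModule.regular β)) :=
    hA.relSubR_eq (fun a b ↦ hA.mul_apply a (E.incl b)) hA.aut_eq
  rw [relSubR_eq, hA.canPreLin_eq]
  exact ⟨fun h ↦ h _ rfl, fun h canMap hcan ↦
    (LinearMap.cancel_right (Submodule.mkQ_surjective _)).1 hcan ▸ h⟩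

theorem HomComoduleAlgebra.IsTwistOf.mkQ_quotCoactPreR (hA : Ac.IsTwistOf E)
    (T : EquivariantModule τ M) :
    TensorProduct.map (E.inducedRel T).mkQ LinearMap.id ∘ₗ quotCoactPreR Ac T.aut =
      ((E.inducedAut T).symm.toLinearMap.rTensor H ∘ₗ E.inducedCoact T) ∘ₗ
        (E.inducedRel T).mkQ := by
  have inducedAut_symm_tmul (m : M) (a : A) :
      (E.inducedAut T).symm (E.tmul T m (Ac.aut a)) = E.tmul T (T.aut.symm m) a := by
    simp [LinearEquiv.symm_apply_eq, hA.aut_apply]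
  have map_mkQ (m : M) (x : A ⊗[k] H) :
      TensorProduct.map (E.inducedRel T).mkQ LinearMap.id ((TensorProduct.assoc k M A H).symm
          (T.aut.symm m ⊗ₜ TensorProduct.map LinearMap.id Hb.aut.toLinearMap x)) =
        (E.inducedAut T).symm.toLinearMap.rTensor H
          ((E.tmul T m).rTensor H (TensorProduct.congr Ac.aut Hb.aut x)) := by
    induction x with
    | zero => simp
    | add x y hx hy => simp_all [TensorProduct.tmul_add]
    | tmul a h => exact congrArg (· ⊗ₜ Hb.aut h) (inducedAut_symm_tmul m a).symm
  refine TensorProduct.ext' fun m a ↦ ?_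
  change _ = (E.inducedAut T).symm.toLinearMap.rTensor H
    ((E.tmul T m).rTensor H (E.coact.toLinearMap a))
  rw [hA.coact_eq]
  exact map_mkQ m (Ac.coact a)

theorem HomComoduleAlgebra.IsTwistOf.mkQ_map_aut_symm (hA : Ac.IsTwistOf E)
    (T : EquivariantModule τ M) :
    (E.inducedRel T).mkQ ∘ₗ TensorProduct.map T.aut.symm.toLinearMap Ac.aut.symm.toLinearMap =
      (E.inducedAut T).symm.toLinearMap ∘ₗ (E.inducedRel T).mkQ := by
  refine TensorProduct.ext' fun m a ↦ (E.inducedAut T).injective ?_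
  change E.inducedAut T (E.tmul T (T.aut.symm m) (Ac.aut.symm a)) =
    E.inducedAut T ((E.inducedAut T).symm (E.tmul T m a))
  simp [hA.aut_eq]

theorem ComoduleExtension.unitMap_bijective_iff (T : EquivariantModule τ M) :
    Function.Bijective (E.unitMap T) ↔
      Function.Injective (fun m ↦ E.tmul T m 1) ∧
        ∀ x, E.inducedCoact T x = x ⊗ₜ 1 → ∃ m, E.tmul T m 1 = x := by
  simp only [Function.Bijective, Function.Surjective, Subtype.forall, Subtype.ext_iff,
    E.coe_unitMap, HopfModule.mem_coinvariants]
  exact and_congr_left' ⟨fun h m m' hm ↦ h (Subtype.ext hm),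
    fun h m m' hm ↦ h (congrArg Subtype.val hm)⟩

theorem HomModuleOn.IsTwistOf.unitBijectiveR_iff (hA : Ac.IsTwistOf E) (hH : Hb.IsTwistOf α)
    {S : HomModuleOn Ac (coinvA Ac) M} {T : EquivariantModule τ M} (hS : S.IsTwistOf E T) :
    UnitBijectiveR Ac (coinvA Ac) S ↔ Function.Bijective (E.unitMap T) := by
  have coinvariant_iff (x : E.Induced T) :
      (E.inducedAut T).symm.toLinearMap.rTensor H (E.inducedCoact T x) =
        (E.inducedAut T).symm x ⊗ₜ 1 ↔ E.inducedCoact T x = x ⊗ₜ 1 :=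
    ((E.inducedAut T).symm.rTensor H).injective.eq_iff (b := x ⊗ₜ 1)
  rw [UnitBijectiveR, hS.relSubR_eq hA, hS.aut_eq, hA.mkQ_quotCoactPreR, hA.mkQ_map_aut_symm,
    E.unitMap_bijective_iff, hH.one_eq, hA.one_eq]
  simp only [LinearMap.cancel_right (Submodule.mkQ_surjective _), forall_eq_apply_imp_iff,
    forall_eq, LinearMap.comp_apply, LinearEquiv.coe_coe, coinvariant_iff]
  refine (and_iff_right fun m ↦ ?_).trans (and_congr ?_ (forall₂_congr fun x _ ↦ ?_))
  · exact ((HopfModule.mem_coinvariants _).1 (E.unitMap T (T.aut.symm m)).2)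
  · exact T.aut.symm.toEquiv.injective_comp fun m ↦ E.tmul T m 1
  · exact (T.aut.symm.surjective.exists (p := fun m ↦ E.tmul T m 1 = x)).symm

theorem HomComoduleAlgebra.IsTwistOf.forall_unitBijectiveR_iff (hA : Ac.IsTwistOf E)
    (hH : Hb.IsTwistOf α) :
    (∀ (M : Type) [AddCommGroup M] [Module k M] (S : HomModuleOn Ac (coinvA Ac) M),
        UnitBijectiveR Ac (coinvA Ac) S) ↔
      ∀ ⦃M : Type⦄ [AddCommGroup M] [Module k M] (T : EquivariantModule τ M),
        Function.Bijective (E.unitMap T) := by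
  constructor
  · intro h M _ _ T
    obtain ⟨S, hS⟩ := hA.exists_homModuleOn T
    exact (hS.unitBijectiveR_iff hA hH).1 (h M S)
  · intro h M _ _ S
    obtain ⟨T, hS⟩ := hA.exists_equivariantModule S
    exact (hS.unitBijectiveR_iff hA hH).2 (h T)

theorem HomHopfModule.IsTwistOf.coinvSubmoduleOf_eq (hH : Hb.IsTwistOf α)
    {P : HomHopfModule Ac N} {Q : HopfModule E N} (hP : P.IsTwistOf Q) :
    coinvSubmoduleOf Hb.one P.coact P.aut = Q.coinvariants := by
  ext n
  rw [Q.mem_coinvariants, hP.coact_eq, untwistCoact_eq_tmul_iff (by simp [hH.aut_apply]),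
    ← hH.one_eq]
  exact sub_eq_zero

theorem HomHopfModule.IsTwistOf.span_relations_eq (hA : Ac.IsTwistOf E)
    {P : HomHopfModule Ac N} {Q : HopfModule E N} (hP : P.IsTwistOf Q) :
    Submodule.span k {x | ∃ (n n' n'' : Q.coinvariants) (a b : A),
      b ∈ coinvA Ac ∧ (n' : N) = P.act n b ∧ (n'' : N) = P.aut n ∧
        x = n' ⊗ₜ[k] Ac.aut a - n'' ⊗ₜ[k] Ac.mul b a} = E.inducedRel Q.coinvariantsModule := by
  have coe_aut (n : Q.coinvariants) : (Q.coinvariantsModule.aut n : N) = P.aut n :=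
    (LinearEquiv.congr_fun hP.aut_eq n.1).symm
  have coe_aut_act (b : B) (n : Q.coinvariants) :
      (Q.coinvariantsModule.aut (Q.coinvariantsModule.act b n) : N) = P.act n (E.incl b) :=
    (hP.act_apply n _).symm
  rw [← E.span_aut_tmul_eq_inducedRel, ← hA.range_incl]
  refine congrArg (Submodule.span k) (Set.ext fun x ↦ ⟨?_, ?_⟩)
  · rintro ⟨n, n', n'', a, _, ⟨b, rfl⟩, hn', hn'', rfl⟩
    obtain rfl := Subtype.ext (hn'.trans (coe_aut_act b n).symm)
    obtain rfl := Subtype.ext (hn''.trans (coe_aut n).symm)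
    exact ⟨b, n, a, by rw [hA.aut_apply, hA.mul_apply]⟩
  · rintro ⟨b, n, a, rfl⟩
    exact ⟨n, _, _, a, _, ⟨b, rfl⟩, coe_aut_act b n, coe_aut n,
      by rw [hA.aut_apply, hA.mul_apply]⟩

theorem HomHopfModule.IsTwistOf.counitBijectiveR_iff (hA : Ac.IsTwistOf E) (hH : Hb.IsTwistOf α)
    {P : HomHopfModule Ac N} {Q : HopfModule E N} (hP : P.IsTwistOf Q) :
    CounitBijectiveR Ac (coinvA Ac) P ↔ Function.Bijective Q.counitMap := by
  have lift_eq : TensorProduct.lift (P.act ∘ₗ Q.coinvariants.subtype) =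
      (Q.aut.toLinearMap ∘ₗ Q.counitMap) ∘ₗ (E.inducedRel Q.coinvariantsModule).mkQ :=
    TensorProduct.ext' fun n a ↦ hP.act_apply n a
  rw [CounitBijectiveR, counitPre, relCoinvR, hP.coinvSubmoduleOf_eq hH, hP.span_relations_eq hA,
    lift_eq, surjective_comp_mkQ_and_ker_eq_iff, LinearMap.coe_comp]
  exact Q.aut.bijective.of_comp_iff' _

theorem HomComoduleAlgebra.IsTwistOf.forall_counitBijectiveR_iff (hA : Ac.IsTwistOf E)
    (hH : Hb.IsTwistOf α) :
    (∀ (N : Type) [AddCommGroup N] [Module k N] (P : HomHopfModule Ac N),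
        CounitBijectiveR Ac (coinvA Ac) P) ↔
      ∀ ⦃N : Type⦄ [AddCommGroup N] [Module k N] (Q : HopfModule E N),
        Function.Bijective Q.counitMap := by
  constructor
  · intro h N _ _ Q
    obtain ⟨P, hP⟩ := hA.exists_homHopfModule hH Q
    exact (hP.counitBijectiveR_iff hA hH).1 (h N P)
  · intro h N _ _ P
    obtain ⟨Q, hP⟩ := hA.exists_hopfModule hH P
    exact (hP.counitBijectiveR_iff hA hH).2 (h Q)

end Transfer

/-- The multiplicative part of a Hom-comodule algebra. -/
def HomComoduleAlgebra.toMonoidalHomAlgebra {k A H : Type} [Field k] [AddCommGroup A] [Module k A]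
    [AddCommGroup H] [Module k H] {Hb : MonoidalHomBialgebra k H} (Ac : HomComoduleAlgebra Hb A) :
    MonoidalHomAlgebra k A where
  mul := Ac.mul
  one := Ac.one
  aut := Ac.aut
  hom_assoc := Ac.hom_assoc
  mulOne := Ac.mulOne
  oneMul := Ac.oneMul
  aut_mul := Ac.aut_mul
  aut_one := Ac.aut_one

theorem statement7_general {k A H : Type} [Field k] [AddCommGroup H] [Module k H]
    {Hb : MonoidalHomBialgebra k H} [AddCommGroup A] [Module k A] (Ac : HomComoduleAlgebra Hb A) :
    (FaithfullyFlatLeftOf Ac (coinvA Ac) ∧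
      (∀ canMap : ((A ⊗[k] A) ⧸ relSubR Ac.mul Ac.aut (coinvA Ac) Ac.mul Ac.aut) →ₗ[k] A ⊗[k] H,
        canMap ∘ₗ (relSubR Ac.mul Ac.aut (coinvA Ac) Ac.mul Ac.aut).mkQ = canPreLin Ac →
          Function.Bijective canMap)) ↔
    ((∀ (M : Type) [AddCommGroup M] [Module k M] (S : HomModuleOn Ac (coinvA Ac) M),
        UnitBijectiveR Ac (coinvA Ac) S) ∧
      ∀ (N : Type) [AddCommGroup N] [Module k N] (P : HomHopfModule Ac N),
        CounitBijectiveR Ac (coinvA Ac) P) := by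
  let := Hb.toMonoidalHomAlgebra.untwistRing
  let := Hb.untwistBialgebra
  let := Ac.toMonoidalHomAlgebra.untwistRing
  let := Ac.toMonoidalHomAlgebra.untwistAlgebra
  have hH := Hb.isTwistOf_untwistAut
  obtain ⟨B, _, _, τ, E, hA⟩ := HomComoduleAlgebra.exists_isTwistOf (Ac := Ac) hH
    (β := Ac.toMonoidalHomAlgebra.untwistAut) rfl Ac.toMonoidalHomAlgebra.mul_eq rfl
  exact (and_congr hA.faithfullyFlatLeftOf_iff hA.canMap_bijective_iff).trans <|
    E.faithfullyFlat_and_isGalois_iff_isEquivalence.trans <|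
      (and_congr (hA.forall_unitBijectiveR_iff hH) (hA.forall_counitBijectiveR_iff hH)).symm

end

/-! STATEMENT 7 (Doi–Takeuchi): `A/B` is a faithfully flat Hom-Hopf-Galois extension
iff `(F, G)` is a pair of inverse equivalences. -/
theorem statement7
    (k : Type) [Field k] (H : Type) [AddCommGroup H] [Module k H]
    (Hh : MonoidalHomHopf k H)
    (Sinv : H →ₗ[k] H)
    (hSinv₁ : Sinv ∘ₗ Hh.antipode = LinearMap.id)
    (hSinv₂ : Hh.antipode ∘ₗ Sinv = LinearMap.id)
    (A : Type) [AddCommGroup A] [Module k A]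
    (Ac : HomComoduleAlgebra Hh.toMonoidalHomBialgebra A) :
    -- (1): A is faithfully flat as a left B-Hom-module and can is bijective
    (FaithfullyFlatLeftOf Ac (coinvA Ac) ∧
      (∀ canMap : ((A ⊗[k] A) ⧸ relSubR Ac.mul Ac.aut (coinvA Ac) Ac.mul Ac.aut) →ₗ[k] A ⊗[k] H,
        canMap ∘ₗ (relSubR Ac.mul Ac.aut (coinvA Ac) Ac.mul Ac.aut).mkQ = canPreLin Ac →
        Function.Bijective canMap)) ↔
    -- (2): the unit and counit of the adjunction (F, G) are bijective
    ((∀ (M : Type) [AddCommGroup M] [Module k M] (S : HomModuleOn Ac (coinvA Ac) M),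
        UnitBijectiveR Ac (coinvA Ac) S) ∧
      (∀ (N : Type) [AddCommGroup N] [Module k N] (P : HomHopfModule Ac N),
        CounitBijectiveR Ac (coinvA Ac) P)) :=
  statement7_general Ac
end

section
/- Let (H,α) be a monoidal Hom-Hopf algebra, (A,β) a right (H,α)-Hom-comodule algebra, and (M,μ) a left (H,α)-Hom-comodule with coaction m↦m₍₋₁₎⊗m₍₀₎. Equip A⊗M with the right (H,α)-Hom-comodule structure ρʳ(a⊗m)=(a₍₀₎⊗m₍₀₎)⊗a₍₁₎S(m₍₋₁₎). Then the coinvariants coincide with the cotensor product: (A⊗M)^{coH} = A□_H M; i.e. an element Σa⊗m∈A⊗M satisfies ρʳ(Σa⊗m)=Σ(β⁻¹(a)⊗μ⁻¹(m))⊗1_H if and only if Σ(a₍₀₎⊗a₍₁₎)⊗μ⁻¹(m)=Σ(β⁻¹(a)⊗m₍₋₁₎)⊗m₍₀₎. -/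
open TensorProduct

/-! The maps `h ⊗ m ↦ h · S(m₍₋₁₎) ⊗ m₍₀₎` and `h ⊗ m ↦ h · m₍₋₁₎ ⊗ m₍₀₎` of `H ⊗ M` are, up to
the structure automorphisms, inverse to each other. Preceded by `id ⊗ μ` and tensored with `A`, the
first one carries the two sides `(a₍₀₎ ⊗ a₍₁₎) ⊗ μ⁻¹(m)` and `(β⁻¹(a) ⊗ m₍₋₁₎) ⊗ m₍₀₎` of the
cotensor equation to the two sides `(a₍₀₎ ⊗ m₍₀₎) ⊗ a₍₁₎S(m₍₋₁₎)` and `(β⁻¹(a) ⊗ μ⁻¹(m)) ⊗ 1` of the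
coinvariance equation, and it is injective, so the two equations have the same solutions. -/

noncomputable section

namespace HomLeftComodule

variable {k : Type} [Field k] {H : Type} [AddCommGroup H] [Module k H]
  {M : Type} [AddCommGroup M] [Module k M]

section Bialgebra

variable {Hb : MonoidalHomBialgebra k H} (Mc : HomLeftComodule Hb M)

theorem coact_aut_apply (m : M) :
    Mc.coact (Mc.aut m) =
      TensorProduct.map Hb.aut.toLinearMap Mc.aut.toLinearMap (Mc.coact m) :=
  LinearMap.congr_fun Mc.coact_aut m

/-- The map `h ⊗ m ↦ h · f(m₍₋₁₎) ⊗ m₍₀₎`, which multiplies the coaction, twisted by `f`, into the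
left factor. For `f = id` it is the Galois map of the comodule `M`. -/
def mulCoact (f : H →ₗ[k] H) : H ⊗[k] M →ₗ[k] H ⊗[k] M :=
  (TensorProduct.lift Hb.mul ∘ₗ f.lTensor H).rTensor M ∘ₗ
    (TensorProduct.assoc k H H M).symm.toLinearMap ∘ₗ Mc.coact.lTensor H

theorem mulCoact_tmul (f : H →ₗ[k] H) (h : H) (m : M) :
    Mc.mulCoact f (h ⊗ₜ m) = (Hb.mul h ∘ₗ f).rTensor M (Mc.coact m) := by
  simp only [mulCoact, LinearMap.comp_apply, LinearMap.lTensor_tmul, LinearEquiv.coe_coe]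
  induction Mc.coact m using TensorProduct.induction_on with
  | zero => simp
  | add x y hx hy => simp only [TensorProduct.tmul_add, map_add, hx, hy]
  | tmul g n => simp

theorem mulCoact_comp_rTensor (f g : H →ₗ[k] H) :
    Mc.mulCoact g ∘ₗ f.rTensor M =
      (TensorProduct.lift Hb.mul ∘ₗ TensorProduct.map f g).rTensor M ∘ₗ
        (TensorProduct.assoc k H H M).symm.toLinearMap ∘ₗ Mc.coact.lTensor H := by
  refine TensorProduct.ext' fun h m ↦ ?_
  simp only [mulCoact, LinearMap.comp_apply, LinearMap.rTensor_tmul, LinearMap.lTensor_tmul,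
    LinearEquiv.coe_coe]
  induction Mc.coact m using TensorProduct.induction_on with
  | zero => simp
  | add x y hx hy => simp only [TensorProduct.tmul_add, map_add, hx, hy]
  | tmul g n => simp

theorem map_counit_coact (e : H) (m : M) :
    TensorProduct.map (LinearMap.toSpanSingleton k H e ∘ₗ Hb.counit) Mc.aut.symm.toLinearMap
        (Mc.coact m) =
      e ⊗ₜ Mc.aut.symm (Mc.aut.symm m) := by
  have hcounit : TensorProduct.lid k M (TensorProduct.map Hb.counit LinearMap.id (Mc.coact m)) =
      Mc.aut.symm m := LinearMap.congr_fun Mc.counit m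
  rw [← hcounit]
  induction Mc.coact m using TensorProduct.induction_on with
  | zero => simp
  | add x y hx hy => simp only [TensorProduct.tmul_add, map_add, hx, hy]
  | tmul g n => simp [TensorProduct.smul_tmul]

theorem mulCoact_coact_of_convolution_eq_unit {f g : H →ₗ[k] H}
    (hfg : TensorProduct.lift Hb.mul ∘ₗ TensorProduct.map f g ∘ₗ Hb.comul =
      LinearMap.toSpanSingleton k H Hb.one ∘ₗ Hb.counit) (m : M) :
    Mc.mulCoact g ((f ∘ₗ Hb.aut.symm.toLinearMap).rTensor M (Mc.coact m)) =
      Hb.one ⊗ₜ Mc.aut.symm (Mc.aut.symm m) := by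
  have hcoassoc : TensorProduct.map Hb.comul Mc.aut.symm.toLinearMap (Mc.coact m) =
      (TensorProduct.assoc k H H M).symm
        (TensorProduct.map Hb.aut.symm.toLinearMap Mc.coact (Mc.coact m)) :=
    LinearMap.congr_fun Mc.coassoc m
  calc Mc.mulCoact g ((f ∘ₗ Hb.aut.symm.toLinearMap).rTensor M (Mc.coact m))
    _ = (TensorProduct.lift Hb.mul ∘ₗ TensorProduct.map f g).rTensor M
          ((TensorProduct.assoc k H H M).symm
            (TensorProduct.map Hb.aut.symm.toLinearMap Mc.coact (Mc.coact m))) := by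
      rw [LinearMap.rTensor_comp_apply, ← LinearMap.lTensor_comp_rTensor H _ Mc.coact]
      exact LinearMap.congr_fun (Mc.mulCoact_comp_rTensor f g) _
    _ = TensorProduct.map (TensorProduct.lift Hb.mul ∘ₗ TensorProduct.map f g ∘ₗ Hb.comul)
          Mc.aut.symm.toLinearMap (Mc.coact m) := by
      rw [← hcoassoc, LinearMap.rTensor_map, LinearMap.comp_assoc]
    _ = Hb.one ⊗ₜ Mc.aut.symm (Mc.aut.symm m) := by
      rw [hfg, map_counit_coact]

theorem mulCoact_aut_aut_comp_rTensor_mul (h : H) (f : H →ₗ[k] H) :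
    Mc.mulCoact (Hb.aut ≪≫ₗ Hb.aut).toLinearMap ∘ₗ
        (Hb.mul h ∘ₗ Hb.aut.toLinearMap ∘ₗ f).rTensor M =
      (Hb.mul (Hb.aut h) ∘ₗ Hb.aut.toLinearMap).rTensor M ∘ₗ Mc.mulCoact LinearMap.id ∘ₗ
        f.rTensor M := by
  have hassoc (g : H) :
      Hb.mul (Hb.mul h (Hb.aut (f g))) ∘ₗ (Hb.aut ≪≫ₗ Hb.aut).toLinearMap =
        (Hb.mul (Hb.aut h) ∘ₗ Hb.aut.toLinearMap) ∘ₗ Hb.mul (f g) := by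
    ext x
    simp [Hb.aut_mul, Hb.hom_assoc]
  ext g m
  simp [mulCoact_tmul, hassoc, LinearMap.rTensor_comp_apply]

end Bialgebra

section Hopf

variable {Hh : MonoidalHomHopf k H} (Mc : HomLeftComodule Hh.toMonoidalHomBialgebra M)

theorem mulCoact_antipode_lTensor_aut_coact (m : M) :
    Mc.mulCoact Hh.antipode (Mc.aut.toLinearMap.lTensor H (Mc.coact m)) =
      Hh.one ⊗ₜ Mc.aut.symm m := by
  have hcoact : Mc.aut.toLinearMap.lTensor H (Mc.coact m) =
      (LinearMap.id ∘ₗ Hh.aut.symm.toLinearMap).rTensor M (Mc.coact (Mc.aut m)) := by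
    rw [coact_aut_apply, LinearMap.rTensor_map]
    simp [LinearMap.lTensor]
  rw [hcoact, Mc.mulCoact_coact_of_convolution_eq_unit Hh.antipode_mul_right,
    LinearEquiv.symm_apply_apply]

theorem mulCoact_aut_aut_comp_mulCoact_antipode :
    Mc.mulCoact (Hh.aut ≪≫ₗ Hh.aut).toLinearMap ∘ₗ Mc.mulCoact Hh.antipode =
      TensorProduct.map (Hh.aut ≪≫ₗ Hh.aut).toLinearMap
        (Mc.aut.symm ≪≫ₗ Mc.aut.symm).toLinearMap := by
  have hantipode : Hh.aut.toLinearMap ∘ₗ Hh.antipode ∘ₗ Hh.aut.symm.toLinearMap =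
      Hh.antipode := by
    rw [← LinearMap.comp_assoc, ← Hh.antipode_aut, LinearMap.comp_assoc, LinearEquiv.comp_symm,
      LinearMap.comp_id]
  ext h m
  have hunit := Mc.mulCoact_coact_of_convolution_eq_unit Hh.antipode_mul_left m
  have hassoc := LinearMap.congr_fun
    (Mc.mulCoact_aut_aut_comp_rTensor_mul h (Hh.antipode ∘ₗ Hh.aut.symm.toLinearMap)) (Mc.coact m)
  simp only [hantipode, LinearMap.comp_apply, hunit] at hassoc
  simp [mulCoact_tmul, hassoc, Hh.aut_one, Hh.mulOne]

theorem mulCoact_antipode_injective : Function.Injective (Mc.mulCoact Hh.antipode) := by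
  apply Function.Injective.of_comp (f := Mc.mulCoact (Hh.aut ≪≫ₗ Hh.aut).toLinearMap)
  rw [← LinearMap.coe_comp, mulCoact_aut_aut_comp_mulCoact_antipode]
  exact (TensorProduct.congr (Hh.aut ≪≫ₗ Hh.aut) (Mc.aut.symm ≪≫ₗ Mc.aut.symm)).injective

variable {X : Type} [AddCommGroup X] [Module k X]

/-- The map `a ⊗ m ↦ (a₍₀₎ ⊗ m₍₀₎) ⊗ a₍₁₎ · S(m₍₋₁₎)` on `X ⊗ M`, where `ρ a = a₍₀₎ ⊗ a₍₁₎`; it is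
the codiagonal right coaction on `X ⊗ M` when `ρ` is a coaction. -/
def tensorCoact (ρ : X →ₗ[k] X ⊗[k] H) : X ⊗[k] M →ₗ[k] (X ⊗[k] M) ⊗[k] H :=
  (TensorProduct.map LinearMap.id (TensorProduct.lift Hh.mul)) ∘ₗ
    (TensorProduct.tensorTensorTensorComm k X H M H).toLinearMap ∘ₗ
      (TensorProduct.map ρ
        ((TensorProduct.map LinearMap.id Hh.antipode) ∘ₗ
          (TensorProduct.comm k H M).toLinearMap ∘ₗ Mc.coact))

variable (X) in
/-- The map `(x ⊗ h) ⊗ m ↦ (x ⊗ μ(m₍₀₎)) ⊗ h · S(α(m₍₋₁₎))`, which turns the cotensor equation in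
`(X ⊗ H) ⊗ M` into the coinvariance equation in `(X ⊗ M) ⊗ H`. -/
def cotensorToCoinv : (X ⊗[k] H) ⊗[k] M →ₗ[k] (X ⊗[k] M) ⊗[k] H :=
  (TensorProduct.assoc k X M H).symm.toLinearMap ∘ₗ
    ((TensorProduct.comm k H M).toLinearMap ∘ₗ Mc.mulCoact Hh.antipode ∘ₗ
      Mc.aut.toLinearMap.lTensor H).lTensor X ∘ₗ
        (TensorProduct.assoc k X H M).toLinearMap

variable (X) in
theorem cotensorToCoinv_injective : Function.Injective (Mc.cotensorToCoinv X) := by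
  have hlTensor : Function.Injective (Mc.aut.toLinearMap.lTensor H) :=
    (TensorProduct.congr (LinearEquiv.refl k H) Mc.aut).injective
  have hinner := (TensorProduct.comm k H M).injective.comp
    (Mc.mulCoact_antipode_injective.comp hlTensor)
  exact (TensorProduct.assoc k X M H).symm.injective.comp
    ((Module.Flat.lTensor_preserves_injective_linearMap _ hinner).comp
      (TensorProduct.assoc k X H M).injective)

theorem cotensorToCoinv_comp_map_rightCoact (ρ : X →ₗ[k] X ⊗[k] H) :
    Mc.cotensorToCoinv X ∘ₗ TensorProduct.map ρ Mc.aut.symm.toLinearMap = Mc.tensorCoact ρ := by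
  refine TensorProduct.ext' fun a m ↦ ?_
  simp only [cotensorToCoinv, tensorCoact, LinearMap.comp_apply, TensorProduct.map_tmul,
    LinearEquiv.coe_coe]
  induction ρ a using TensorProduct.induction_on with
  | zero => simp
  | add y z hy hz => simp only [TensorProduct.add_tmul, map_add, hy, hz]
  | tmul x h =>
    simp only [TensorProduct.assoc_tmul, LinearMap.lTensor_tmul, LinearMap.comp_apply,
      LinearEquiv.coe_coe, LinearEquiv.apply_symm_apply, mulCoact_tmul]
    induction Mc.coact m using TensorProduct.induction_on with
    | zero => simp
    | add y z hy hz => simp only [TensorProduct.tmul_add, map_add, hy, hz]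
    | tmul g n => simp

theorem cotensorToCoinv_comp_assoc_symm_comp_map_coact (χ : X →ₗ[k] X) :
    Mc.cotensorToCoinv X ∘ₗ (TensorProduct.assoc k X H M).symm.toLinearMap ∘ₗ
        TensorProduct.map χ Mc.coact =
      (TensorProduct.mk k (X ⊗[k] M) H).flip Hh.one ∘ₗ
        TensorProduct.map χ Mc.aut.symm.toLinearMap := by
  ext a m
  simp [cotensorToCoinv, mulCoact_antipode_lTensor_aut_coact]

end Hopf

end HomLeftComodule

end

theorem statement8_general
    {k : Type} [Field k] {H : Type} [AddCommGroup H] [Module k H] {Hh : MonoidalHomHopf k H}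
    {X : Type} [AddCommGroup X] [Module k X] (ρ : X →ₗ[k] X ⊗[k] H) (χ : X ≃ₗ[k] X)
    {M : Type} [AddCommGroup M] [Module k M]
    (Mc : HomLeftComodule Hh.toMonoidalHomBialgebra M) :
    coinvSetOf Hh.one (Mc.tensorCoact ρ) (TensorProduct.congr χ Mc.aut) =
      (cotensorSub ρ χ Mc.coact Mc.aut : Set (X ⊗[k] M)) := by
  ext t
  have hleft := LinearMap.congr_fun (Mc.cotensorToCoinv_comp_map_rightCoact ρ) t
  have hright := LinearMap.congr_fun
    (Mc.cotensorToCoinv_comp_assoc_symm_comp_map_coact χ.symm.toLinearMap) t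
  calc t ∈ coinvSetOf Hh.one (Mc.tensorCoact ρ) (TensorProduct.congr χ Mc.aut)
    _ ↔ Mc.cotensorToCoinv X (TensorProduct.map ρ Mc.aut.symm.toLinearMap t) =
          Mc.cotensorToCoinv X ((TensorProduct.assoc k X H M).symm
            (TensorProduct.map χ.symm.toLinearMap Mc.coact t)) :=
      (Eq.congr hleft hright).symm
    _ ↔ TensorProduct.map ρ Mc.aut.symm.toLinearMap t =
          (TensorProduct.assoc k X H M).symm (TensorProduct.map χ.symm.toLinearMap Mc.coact t) :=
      (Mc.cotensorToCoinv_injective X).eq_iff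
    _ ↔ t ∈ (cotensorSub ρ χ Mc.coact Mc.aut : Set (X ⊗[k] M)) := sub_eq_zero.symm

/-! STATEMENT 8: For a left Hom-comodule `M`, with the right coaction
`ρʳ(a⊗m)=(a₍₀₎⊗m₍₀₎)⊗a₍₁₎S(m₍₋₁₎)` on `A ⊗ M`, the coinvariants coincide with
the cotensor product `A □_H M`. -/
theorem statement8
    (k : Type) [Field k] (H : Type) [AddCommGroup H] [Module k H]
    (Hh : MonoidalHomHopf k H)
    (A : Type) [AddCommGroup A] [Module k A]
    (Ac : HomComoduleAlgebra Hh.toMonoidalHomBialgebra A)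
    (M : Type) [AddCommGroup M] [Module k M]
    (Mc : HomLeftComodule Hh.toMonoidalHomBialgebra M)
    (ρr : A ⊗[k] M →ₗ[k] (A ⊗[k] M) ⊗[k] H)
    -- ρʳ(a⊗m) = (a₍₀₎ ⊗ m₍₀₎) ⊗ a₍₁₎ · S(m₍₋₁₎)
    (hρr : ρr =
      (TensorProduct.map LinearMap.id (TensorProduct.lift Hh.mul)) ∘ₗ
        (TensorProduct.tensorTensorTensorComm k A H M H).toLinearMap ∘ₗ
          (TensorProduct.map Ac.coact
            ((TensorProduct.map LinearMap.id Hh.antipode) ∘ₗ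
              (TensorProduct.comm k H M).toLinearMap ∘ₗ Mc.coact))) :
    {t : A ⊗[k] M |
        ρr t = ((TensorProduct.map Ac.aut.symm.toLinearMap Mc.aut.symm.toLinearMap) t) ⊗ₜ[k] Hh.one}
      = (cotensorSub Ac.coact Ac.aut Mc.coact Mc.aut : Set (A ⊗[k] M)) := by
  subst hρr
  exact statement8_general Ac.coact Ac.aut Mc
end
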